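/- arXiv:1410.0101 — 2 statements merged into one kernel-verified Lean document; each statement's English description precedes it below -/
import Mathlib

section
/- Let β ∈ ℝ/ℤ and let B : ℝ/ℤ → SL(2,ℝ) be continuous. Then (β, B) is uniformly hyperbolic if and only if the following uniform exponential growth condition holds: there exist c > 0 and ρ > 1 such that ‖B_n(x)‖ > c ρ^{|n|} for all n ∈ ℤ and all x ∈ ℝ/ℤ. -/
open scoped Real
open Matrix

noncomputable section

/-- 2×2 real matrices. -/
abbrev M2 : Type := Matrix (Fin 2) (Fin 2) ℝ

/-- Rotation matrix by angle θ. -/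
def rot (θ : ℝ) : M2 := !![Real.cos θ, -Real.sin θ; Real.sin θ, Real.cos θ]

/-- Euclidean norm of a vector in ℝ². -/
def vnorm (w : Fin 2 → ℝ) : ℝ := ‖(WithLp.equiv 2 (Fin 2 → ℝ)).symm w‖

/-- Operator norm of a 2×2 real matrix acting on Euclidean ℝ². -/
def opNorm (A : M2) : ℝ := ‖Matrix.toEuclideanCLM (𝕜 := ℝ) A‖

/-- Forward iterates B_n(x) = B(x+(n-1)β)⋯B(x+β)B(x). -/
def fwdIter (β : ℝ) (B : ℝ → M2) : ℕ → ℝ → M2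
  | 0, _ => 1
  | n + 1, x => B (x + n * β) * fwdIter β B n x

/-- Cocycle iterates indexed by ℤ: B₀ = Id, B_n for n ≥ 1 as above, and
B_n(x) = [B_{-n}(x+nβ)]⁻¹ for n ≤ -1. -/
def cocycleIter (β : ℝ) (B : ℝ → M2) (n : ℤ) (x : ℝ) : M2 :=
  if 0 ≤ n then fwdIter β B n.toNat x else (fwdIter β B (-n).toNat (x + (n : ℝ) * β))⁻¹

/-- Uniform hyperbolicity of the cocycle (β, B) over the circle ℝ/ℤ
(B is understood as a 1-periodic function of x): there are invariant 1-periodic line fields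
s̄ (stable) and ū (unstable) with uniform exponential contraction forwards resp. backwards. -/
def IsUH (β : ℝ) (B : ℝ → M2) : Prop :=
  ∃ (s u : ℝ → Submodule ℝ (Fin 2 → ℝ)) (c ρ : ℝ),
    0 < c ∧ 1 < ρ ∧
    (∀ x, Module.finrank ℝ (s x) = 1 ∧ Module.finrank ℝ (u x) = 1) ∧
    (∀ x, s (x + 1) = s x ∧ u (x + 1) = u x) ∧
    (∀ x, (s x).map (Matrix.toLin' (B x)) = s (x + β) ∧
          (u x).map (Matrix.toLin' (B x)) = u (x + β)) ∧
    (∀ x, ∀ n : ℕ, 1 ≤ n →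
      (∀ w : Fin 2 → ℝ, w ∈ s x → vnorm w = 1 →
        vnorm ((cocycleIter β B n x) *ᵥ w) < c / ρ ^ n) ∧
      (∀ w : Fin 2 → ℝ, w ∈ u x → vnorm w = 1 →
        vnorm ((cocycleIter β B (-(n : ℤ)) x) *ᵥ w) < c / ρ ^ n))

/-- The Diophantine condition DC_{τ,γ}. -/
def DCwith (τ γ α : ℝ) : Prop :=
  ∀ p q : ℤ, q ≠ 0 → γ / |(q : ℝ)| ^ τ ≤ |α - (p : ℝ) / (q : ℝ)|

/-- The Diophantine condition DC_τ = ∪_{γ>0} DC_{τ,γ}. -/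
def DC (τ α : ℝ) : Prop := ∃ γ > 0, DCwith τ γ α

/-- Condition (V) for a 1-periodic potential: C², the derivative vanishes at exactly two
points of the circle, one a global minimum and the other a global maximum, both
non-degenerate. -/
def ConditionV (v : ℝ → ℝ) : Prop :=
  ContDiff ℝ 2 v ∧
  ∃ z₁ z₂ : ℝ, z₁ ∈ Set.Ico (0 : ℝ) 1 ∧ z₂ ∈ Set.Ico (0 : ℝ) 1 ∧ z₁ ≠ z₂ ∧
    (∀ x ∈ Set.Ico (0 : ℝ) 1, deriv v x = 0 ↔ x = z₁ ∨ x = z₂) ∧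
    (∀ x, v z₁ ≤ v x) ∧ (∀ x, v x ≤ v z₂) ∧
    iteratedDeriv 2 v z₁ ≠ 0 ∧ iteratedDeriv 2 v z₂ ≠ 0

/-- The Schrödinger cocycle map A^{(E-λv)}. -/
def schCocycle (lam : ℝ) (v : ℝ → ℝ) (E : ℝ) (x : ℝ) : M2 :=
  !![E - lam * v x, -1; 1, 0]

/-!
Follow a vector `v` over a time interval on which its orbit never drops below a level `t` and
starts and ends within a bounded factor of `t`. In the orthogonal frames spanned by the orbit and
its rotation by a right angle the one-step operators are upper triangular, and each step changes
the off-diagonal entry of the product by a bounded amount, because the area spanned with any other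
vector is preserved. The norm of the product therefore grows at most linearly, so exponential
growth bounds the length of such plateaus. Hence every orbit doubles, forwards or backwards,
within a uniform window: maxima over `[0, n]` lie near the ends, and orbits that are bounded in
the future decay exponentially. The stable line consists of the vectors with bounded forward
orbit; it is nonzero by compactness and is not the whole plane by the uniform boundedness
principle. Time reversal gives the unstable line.

Conversely, an area-preserving operator that contracts a unit vector by a factor `ε` has norm at
least `ε⁻¹`.
-/

open Module Filter Asymptotics InnerProductSpace

section Plane

attribute [local instance] FiniteDimensional.of_fact_finrank_eq_two

variable {E : Type*} [NormedAddCommGroup E] [InnerProductSpace ℝ E]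

/-- The coefficient of the orthogonal projection of `z` onto the line spanned by `v`; it is the
off-diagonal entry of an operator written in orthogonal frames adapted to one of its orbits.
It is `0` when `v = 0`. -/
def projCoeff (v z : E) : ℝ := ⟪v, z⟫_ℝ / ‖v‖ ^ 2

lemma abs_projCoeff_mul_norm_le (v z : E) : |projCoeff v z| * ‖v‖ ≤ ‖z‖ := by
  rcases eq_or_ne v 0 with rfl | hv
  · simp
  have hv' : 0 < ‖v‖ := norm_pos_iff.2 hv
  rw [projCoeff, abs_div, abs_of_pos (by positivity : 0 < ‖v‖ ^ 2), div_mul_eq_mul_div,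
    div_le_iff₀ (by positivity)]
  nlinarith [abs_real_inner_le_norm v z]

variable [Fact (finrank ℝ E = 2)]

lemma nonempty_orientation : Nonempty (Orientation ℝ E (Fin 2)) :=
  ⟨((stdOrthonormalBasis ℝ E).reindex (finCongr Fact.out)).toBasis.orientation⟩

lemma areaForm_map_eq_det_mul (o : Orientation ℝ E (Fin 2)) (A : E →L[ℝ] E) (x y : E) :
    o.areaForm (A x) (A y) = A.det * o.areaForm x y := by
  have hA : ![A x, A y] = A ∘ ![x, y] := by ext i; fin_cases i <;> rfl
  rw [o.areaForm_to_volumeForm, o.areaForm_to_volumeForm, hA, o.volumeForm_robust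
    (o.finOrthonormalBasis zero_lt_two Fact.out) (o.finOrthonormalBasis_orientation _ _)]
  exact Basis.det_comp _ (A : E →ₗ[ℝ] E) _

lemma norm_le_opNorm_mul_norm_map {A : E →L[ℝ] E} (hA : A.det = 1) (x : E) :
    ‖x‖ ≤ ‖A‖ * ‖A x‖ := by
  obtain ⟨o⟩ := nonempty_orientation (E := E)
  rcases eq_or_ne x 0 with rfl | hx
  · simp
  refine le_of_mul_le_mul_right ?_ (norm_pos_iff.2 hx)
  calc ‖x‖ * ‖x‖ = o.areaForm (A x) (A (o.rightAngleRotation x)) := by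
        rw [areaForm_map_eq_det_mul, hA, one_mul, o.areaForm_rightAngleRotation_right,
          real_inner_self_eq_norm_mul_norm]
    _ ≤ ‖A x‖ * ‖A (o.rightAngleRotation x)‖ := o.areaForm_le _ _
    _ ≤ ‖A x‖ * (‖A‖ * ‖o.rightAngleRotation x‖) := by gcongr; exact A.le_opNorm _
    _ = ‖A‖ * ‖A x‖ * ‖x‖ := by rw [LinearIsometryEquiv.norm_map]; ring

lemma opNorm_le_of_mul_eq_one {A S : E →L[ℝ] E} (hA : A.det = 1) (h : A * S = 1) : ‖S‖ ≤ ‖A‖ :=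
  S.opNorm_le_bound (norm_nonneg A) fun x => by
    have hx : A (S x) = x := congr($h x)
    simpa only [hx] using norm_le_opNorm_mul_norm_map hA (S x)

-- The preimages of an orthonormal basis span unit area, so one of them has norm at least one.
lemma exists_norm_eq_one_norm_map_le_one {A : E →L[ℝ] E} (hA : A.det = 1) :
    ∃ w, ‖w‖ = 1 ∧ ‖A w‖ ≤ 1 := by
  obtain ⟨o⟩ := nonempty_orientation (E := E)
  have : Nontrivial E := nontrivial_of_finrank_eq_succ (R := ℝ) (n := 1) Fact.out
  suffices h : ∃ w, 1 ≤ ‖w‖ ∧ ‖A w‖ = 1 by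
    obtain ⟨w, hw, hAw⟩ := h
    refine ⟨‖w‖⁻¹ • w, norm_smul_inv_norm (𝕜 := ℝ) (by rintro rfl; norm_num at hw), ?_⟩
    rw [map_smul, norm_smul, norm_inv, norm_norm, hAw, mul_one]
    exact inv_le_one_of_one_le₀ hw
  have hsurj : Function.Surjective A :=
    (LinearMap.equivOfDetNeZero (A : E →ₗ[ℝ] E) (hA.trans_ne one_ne_zero)).surjective
  obtain ⟨e, he⟩ := exists_norm_eq E zero_le_one
  obtain ⟨x, hx⟩ := hsurj e
  obtain ⟨y, hy⟩ := hsurj (o.rightAngleRotation e)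
  have hxy : 1 ≤ ‖x‖ * ‖y‖ :=
    calc (1 : ℝ) = o.areaForm (A x) (A y) := by simp [hx, hy, he]
      _ = o.areaForm x y := by rw [areaForm_map_eq_det_mul, hA, one_mul]
      _ ≤ ‖x‖ * ‖y‖ := o.areaForm_le x y
  rcases le_or_gt 1 ‖x‖ with h | h
  · exact ⟨x, h, by rw [hx, he]⟩
  · exact ⟨y, by nlinarith [norm_nonneg x], by rw [hy, LinearIsometryEquiv.norm_map, he]⟩

lemma one_le_opNorm {A : E →L[ℝ] E} (hA : A.det = 1) : 1 ≤ ‖A‖ := by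
  obtain ⟨w, hw, hAw⟩ := exists_norm_eq_one_norm_map_le_one hA
  calc 1 = ‖w‖ := hw.symm
    _ ≤ ‖A‖ * ‖A w‖ := norm_le_opNorm_mul_norm_map hA w
    _ ≤ ‖A‖ := mul_le_of_le_one_right (norm_nonneg A) hAw

lemma eq_projCoeff_smul_add (o : Orientation ℝ E (Fin 2)) {v : E} (hv : v ≠ 0) (z : E) :
    z = projCoeff v z • v + (o.areaForm v z / ‖v‖ ^ 2) • o.rightAngleRotation v := by
  refine ext_inner_right ℝ fun y => ?_
  have := norm_ne_zero_iff.2 hv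
  rw [inner_add_left, real_inner_smul_left, real_inner_smul_left, o.inner_rightAngleRotation_left,
    projCoeff]
  field_simp
  linarith [o.inner_mul_inner_add_areaForm_mul_areaForm v z y]

lemma norm_le_abs_projCoeff_mul_add (o : Orientation ℝ E (Fin 2)) {v : E} (hv : v ≠ 0) (z : E) :
    ‖z‖ ≤ |projCoeff v z| * ‖v‖ + |o.areaForm v z| / ‖v‖ := by
  have := norm_ne_zero_iff.2 hv
  calc ‖z‖ ≤ ‖projCoeff v z • v‖ + ‖(o.areaForm v z / ‖v‖ ^ 2) • o.rightAngleRotation v‖ := by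
        conv_lhs => rw [eq_projCoeff_smul_add o hv z]
        exact norm_add_le _ _
    _ = |projCoeff v z| * ‖v‖ + |o.areaForm v z| / ‖v‖ := by
        rw [norm_smul, norm_smul, LinearIsometryEquiv.norm_map, Real.norm_eq_abs, Real.norm_eq_abs,
          abs_div, abs_of_nonneg (sq_nonneg ‖v‖)]
        field_simp

lemma abs_projCoeff_map_le (o : Orientation ℝ E (Fin 2)) (A : E →L[ℝ] E) {v : E} (hv : v ≠ 0)
    (hAv : A v ≠ 0) (z : E) :
    |projCoeff (A v) (A z)| ≤ |projCoeff v z| + ‖A‖ * |o.areaForm v z| / (‖v‖ * ‖A v‖) := by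
  have := norm_ne_zero_iff.2 hv
  have hAv' : 0 < ‖A v‖ := norm_pos_iff.2 hAv
  set d := o.areaForm v z / ‖v‖ ^ 2 with hd
  have hshear : projCoeff (A v) (A z)
      = projCoeff v z + d * projCoeff (A v) (A (o.rightAngleRotation v)) := by
    conv_lhs => rw [eq_projCoeff_smul_add o hv z]
    simp only [projCoeff, map_add, map_smul, inner_add_right, real_inner_smul_right,
      real_inner_self_eq_norm_sq, ← hd]
    field_simp
  have hproj : |projCoeff (A v) (A (o.rightAngleRotation v))| ≤ ‖A‖ * ‖v‖ / ‖A v‖ := by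
    rw [le_div_iff₀ hAv', ← o.rightAngleRotation.norm_map v]
    exact (abs_projCoeff_mul_norm_le _ _).trans (A.le_opNorm _)
  calc |projCoeff (A v) (A z)|
      ≤ |projCoeff v z| + |d| * |projCoeff (A v) (A (o.rightAngleRotation v))| := by
        rw [hshear, ← abs_mul]; exact abs_add_le _ _
    _ ≤ |projCoeff v z| + |d| * (‖A‖ * ‖v‖ / ‖A v‖) := by gcongr
    _ = |projCoeff v z| + ‖A‖ * |o.areaForm v z| / (‖v‖ * ‖A v‖) := by
        rw [hd, abs_div, abs_of_nonneg (sq_nonneg ‖v‖)]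
        field_simp

end Plane

section Sequences

/-- `a` changes by a factor of at most `M` in each step, forwards or backwards. The estimate is
recorded for all pairs of times, so that it can be used without iteration. -/
def HasBoundedRatio (a : ℤ → ℝ) (M : ℝ) : Prop :=
  ∀ i j, a i ≤ M ^ (i - j).natAbs * a j

/-- Within distance `N` of every time there is one where `a` is at least twice as large. -/
def HasDoublingWindow (a : ℤ → ℝ) (N : ℕ) : Prop :=
  ∀ j, ∃ k, (k - j).natAbs ≤ N ∧ 2 * a j ≤ a k

/-- A plateau of ratio `D` is an interval of integers at whose endpoints `a` is at most `D` times
a positive lower bound of `a` on the interval; all of them have length less than `K`. -/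
def HasPlateauBound (a : ℤ → ℝ) (D : ℝ) (K : ℕ) : Prop :=
  ∀ t > 0, ∀ m n : ℤ, m ≤ n → (∀ j ∈ Set.Icc m n, t ≤ a j) → a m ≤ D * t → a n ≤ D * t →
    n - m < K

variable {a : ℤ → ℝ} {M D : ℝ} {K N : ℕ}

lemma HasBoundedRatio.le_pow_mul (ha : HasBoundedRatio a M) (hM : 1 ≤ M) (hpos : ∀ j, 0 < a j)
    {i j : ℤ} (hij : (i - j).natAbs ≤ N) : a i ≤ M ^ N * a j :=
  (ha i j).trans (mul_le_mul_of_nonneg_right (pow_le_pow_right₀ hM hij) (hpos j).le)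

lemma HasBoundedRatio.comp_neg (ha : HasBoundedRatio a M) : HasBoundedRatio (fun j => a (-j)) M :=
  fun i j => by
    rw [show (i - j).natAbs = (-i - -j).natAbs by omega]
    exact ha (-i) (-j)

lemma HasPlateauBound.comp_neg (ha : HasPlateauBound a D K) :
    HasPlateauBound (fun j => a (-j)) D K := by
  intro t ht m n hmn hlow hm hn
  have := ha t ht (-n) (-m) (by omega)
    (fun j hj => by simpa using hlow (-j) ⟨by linarith [hj.2], by linarith [hj.1]⟩) hn hm
  omega

lemma HasBoundedRatio.exists_last_before_drop (ha : HasBoundedRatio a M) (hM : 1 ≤ M)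
    (hpos : ∀ j, 0 < a j) {i : ℤ} (hdrop : ∃ n : ℕ, a (i + n) < a i / M ^ K) :
    ∃ p, i + K ≤ p ∧ (∀ j ∈ Set.Icc i p, a i / M ^ K ≤ a j) ∧ a p ≤ M * (a i / M ^ K) := by
  classical
  set n := Nat.find hdrop
  have hn : a (i + n) < a i / M ^ K := Nat.find_spec hdrop
  have hKn : K < n := by
    by_contra! h
    have := ha.le_pow_mul hM hpos (i := i) (j := i + n) (N := K) (by omega)
    rw [lt_div_iff₀' (by positivity)] at hn
    linarith
  refine ⟨i + n - 1, by omega, fun j hj => ?_, ?_⟩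
  · have := Nat.find_min hdrop (m := (j - i).toNat) (by have := hj.2; omega)
    rwa [not_lt, show i + ((j - i).toNat : ℤ) = j by have := hj.1; omega] at this
  · have := ha.le_pow_mul hM hpos (i := i + n - 1) (j := i + n) (N := 1) (by omega)
    rw [pow_one] at this
    exact this.trans (by gcongr)

lemma HasPlateauBound.exists_drop (hN : HasPlateauBound a (2 * M ^ K) N) (hM : 1 ≤ M) {i : ℤ}
    (hi : 0 < a i) (hlt : ∀ k, (k - i).natAbs ≤ N → a k < 2 * a i) :
    ∃ n : ℕ, a (i + n) < a i / M ^ K := by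
  by_contra! h
  have hlevel : 2 * M ^ K * (a i / M ^ K) = 2 * a i := by field_simp
  have := hN (a i / M ^ K) (by positivity) i (i + N) (by omega)
    (fun j hj => by simpa [Int.toNat_of_nonneg (sub_nonneg.2 hj.1)] using h (j - i).toNat)
    (by linarith) (hlevel ▸ (hlt (i + N) (by simp)).le)
  omega

-- Otherwise `a` drops below the level `a i / M ^ K` on both sides of some time `i`, for the first
-- time after more than `K` steps; the interval in between is a plateau of ratio `M`.
lemma HasBoundedRatio.hasDoublingWindow (ha : HasBoundedRatio a M) (hM : 1 ≤ M)
    (hpos : ∀ j, 0 < a j) (hK : HasPlateauBound a M K) (hN : HasPlateauBound a (2 * M ^ K) N) :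
    HasDoublingWindow a N := by
  intro i
  by_contra! hlt
  obtain ⟨p, hip, hp, hpM⟩ := ha.exists_last_before_drop hM hpos (hN.exists_drop hM (hpos i) hlt)
  obtain ⟨q, hiq, hq, hqM⟩ := ha.comp_neg.exists_last_before_drop (i := -i) hM (fun j => hpos _)
    (hN.comp_neg.exists_drop hM (hpos _) fun k hk => by
      simpa using hlt (-k) (by omega))
  rw [neg_neg] at hq hqM
  have := hK (a i / M ^ K) (by have := hpos i; positivity) (-q) p (by omega) (fun j hj => ?_)
    hqM hpM
  · omega
  rcases le_total i j with h | h
  · exact hp j ⟨h, hj.2⟩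
  · simpa using hq (-j) ⟨by omega, by have := hj.1; omega⟩

lemma HasDoublingWindow.le_pow_mul_max (hN : HasDoublingWindow a N) (ha : HasBoundedRatio a M)
    (hM : 1 ≤ M) (hpos : ∀ j, 0 < a j) {j n : ℤ} (hj : 0 ≤ j) (hjn : j ≤ n) :
    a j ≤ M ^ N * max (a 0) (a n) := by
  obtain ⟨p, hp, hmax⟩ := (Finset.Icc (0 : ℤ) n).exists_max_image a
    ⟨j, Finset.mem_Icc.2 ⟨hj, hjn⟩⟩
  rw [Finset.mem_Icc] at hp
  obtain ⟨k, hk, hpk⟩ := hN p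
  -- A maximum of `a` on `[0, n]` cannot have its doubling window inside `[0, n]`.
  have hout : k < 0 ∨ n < k := by
    by_contra! h
    linarith [hpos p, hmax k (Finset.mem_Icc.2 h)]
  calc a j ≤ a p := hmax j (Finset.mem_Icc.2 ⟨hj, hjn⟩)
    _ ≤ M ^ N * max (a 0) (a n) := by
      rcases hout with h | h
      · exact (ha.le_pow_mul hM hpos (N := N) (j := 0) (by omega)).trans
          (mul_le_mul_of_nonneg_left (le_max_left _ _) (by positivity))
      · exact (ha.le_pow_mul hM hpos (N := N) (j := n) (by omega)).trans
          (mul_le_mul_of_nonneg_left (le_max_right _ _) (by positivity))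

lemma HasDoublingWindow.le_div_two_pow (hN : HasDoublingWindow a N) {S : ℝ}
    (hS : ∀ j, 0 ≤ j → a j ≤ S) (q : ℕ) {j : ℤ} (hj : (q * N : ℤ) ≤ j) : a j ≤ S / 2 ^ q := by
  induction q generalizing j with
  | zero => simpa using hS j (by simpa using hj)
  | succ q ih =>
    obtain ⟨k, hk, hjk⟩ := hN j
    have := ih (j := k) (by push_cast at hj; rw [add_mul] at hj; omega)
    rw [pow_succ, ← div_div]
    linarith

lemma HasDoublingWindow.le_pow_mul_of_bounded (hN : HasDoublingWindow a N)
    (ha : HasBoundedRatio a M) (hM : 1 ≤ M) (hpos : ∀ j, 0 < a j) {S : ℝ}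
    (hS : ∀ j, 0 ≤ j → a j ≤ S) {j : ℤ} (hj : 0 ≤ j) : a j ≤ M ^ N * a 0 := by
  obtain ⟨q, hq⟩ := pow_unbounded_of_one_lt (S / a 0) (one_lt_two (α := ℝ))
  have hle : a (max j (q * N)) ≤ a 0 := by
    refine (hN.le_div_two_pow hS q (le_max_right j _)).trans ?_
    rw [div_lt_comm₀ (hpos 0) (by positivity)] at hq
    exact hq.le
  simpa only [max_eq_left hle] using hN.le_pow_mul_max ha hM hpos hj (le_max_left j (q * N : ℤ))

lemma HasDoublingWindow.le_div_two_pow_of_bounded (hN : HasDoublingWindow a N)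
    (ha : HasBoundedRatio a M) (hM : 1 ≤ M) (hpos : ∀ j, 0 < a j) {S : ℝ}
    (hS : ∀ j, 0 ≤ j → a j ≤ S) (n : ℕ) : a n ≤ M ^ N * a 0 / 2 ^ (n / N) :=
  hN.le_div_two_pow (fun _ => hN.le_pow_mul_of_bounded ha hM hpos hS) _
    (mod_cast Nat.div_mul_le_self n N)

lemma exists_one_lt_forall_pow_le {b : ℝ} (hb : 1 < b) (hN : 0 < N) :
    ∃ r : ℝ, 1 < r ∧ ∀ n, r ^ n ≤ b * b ^ (n / N) := by
  refine ⟨b ^ (N : ℝ)⁻¹, Real.one_lt_rpow hb (by positivity), fun n => ?_⟩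
  calc (b ^ (N : ℝ)⁻¹) ^ n ≤ (b ^ (N : ℝ)⁻¹) ^ (N * (n / N + 1)) :=
        pow_le_pow_right₀ (Real.one_le_rpow hb.le (by positivity)) (Nat.lt_mul_div_succ n hN).le
    _ = b * b ^ (n / N) := by
        rw [pow_mul, Real.rpow_inv_natCast_pow (by positivity) hN.ne', pow_succ']

lemma eventually_add_mul_le_mul_pow {c ρ : ℝ} (hc : 0 < c) (hρ : 1 < ρ) (p q : ℝ) :
    ∀ᶠ L : ℕ in atTop, p + q * L ≤ c * ρ ^ L := by
  have hconst : (fun _ : ℕ => p) =o[atTop] fun L => ρ ^ L :=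
    isLittleO_const_left.2 <| .inr <|
      tendsto_norm_atTop_atTop.comp (tendsto_pow_atTop_atTop_of_one_lt hρ)
  have hlin : (fun L : ℕ => q * (L : ℝ)) =o[atTop] fun L => ρ ^ L :=
    (isLittleO_coe_const_pow_of_one_lt hρ).const_mul_left q
  filter_upwards [(hconst.add hlin).def hc] with L hL
  rw [Real.norm_of_nonneg (by positivity : 0 ≤ ρ ^ L)] at hL
  exact (le_abs_self _).trans hL

end Sequences

section BoundedSubspace

variable {ι E F : Type*} [NormedAddCommGroup E] [NormedSpace ℝ E] [NormedAddCommGroup F]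
  [NormedSpace ℝ F]

/-- The vectors whose images under the operators `T n` stay bounded along the filter `l`; for the
iterates of a hyperbolic cocycle this is the stable line when `l = atTop` and the unstable line
when `l = atBot`. -/
def boundedSubspace (l : Filter ι) (T : ι → E →L[ℝ] F) : Submodule ℝ E where
  carrier := {w | (fun n => T n w) =O[l] (1 : ι → ℝ)}
  add_mem' hv hw := by simpa using IsBigO.add hv hw
  zero_mem' := by simpa using isBigO_zero _ _
  smul_mem' r w hw :=
    (IsBigO.const_smul_left hw r).congr_left fun n => (map_smul (T n) r w).symm

lemma mem_boundedSubspace {l : Filter ι} {T : ι → E →L[ℝ] F} {w : E} :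
    w ∈ boundedSubspace l T ↔ (fun n => T n w) =O[l] (1 : ι → ℝ) :=
  Iff.rfl

lemma mem_boundedSubspace_atTop_int {T : ℤ → E →L[ℝ] F} {w : E} :
    w ∈ boundedSubspace atTop T ↔ ∃ C, ∀ n : ℕ, ‖T n w‖ ≤ C := by
  rw [mem_boundedSubspace, ← Nat.map_cast_int_atTop, isBigO_map]
  exact isBigO_one_nat_atTop_iff

lemma boundedSubspace_comp {κ : Type*} (l : Filter κ) (T : ι → E →L[ℝ] F) (e : κ → ι) :
    boundedSubspace l (T ∘ e) = boundedSubspace (map e l) T :=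
  Submodule.ext fun w => (isBigO_map (f := fun n => T n w) (g := 1)).symm

lemma boundedSubspace_atTop_comp_neg (T : ℤ → E →L[ℝ] F) :
    boundedSubspace atTop (fun n => T (-n)) = boundedSubspace atBot T := by
  rw [← map_neg_atTop, ← boundedSubspace_comp]
  rfl

lemma boundedSubspace_atTop_ne_top [CompleteSpace E] {T : ℤ → E →L[ℝ] F}
    (hT : ∀ C, ∃ n : ℕ, C < ‖T n‖) : boundedSubspace atTop T ≠ ⊤ := fun htop => by
  obtain ⟨C, hC⟩ := banach_steinhaus (g := fun n : ℕ => T n) fun w =>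
    mem_boundedSubspace_atTop_int.1 (htop ▸ Submodule.mem_top)
  obtain ⟨n, hn⟩ := hT C
  exact (hC n).not_gt hn

-- A limit point of the `w n` stays bounded under all `T j`.
lemma boundedSubspace_atTop_ne_bot [FiniteDimensional ℝ E] {T : ℤ → E →L[ℝ] F} {C : ℝ}
    (hT : ∀ n : ℕ, ∃ w, ‖w‖ = 1 ∧ ∀ j : ℕ, j ≤ n → ‖T j w‖ ≤ C) :
    boundedSubspace atTop T ≠ ⊥ := by
  choose w hw hTw using hT
  obtain ⟨v, hv, φ, hφ, hlim⟩ := (isCompact_sphere (0 : E) 1).tendsto_subseq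
    fun n => mem_sphere_zero_iff_norm.2 (hw n)
  refine Submodule.ne_bot_iff _ |>.2 ⟨v, mem_boundedSubspace_atTop_int.2 ⟨C, fun j => ?_⟩, ?_⟩
  · exact le_of_tendsto ((T j).continuous.norm.tendsto v |>.comp hlim) <|
      (eventually_ge_atTop j).mono fun n hn => hTw _ j (hn.trans (hφ.id_le n))
  · exact ne_zero_of_mem_unit_sphere ⟨v, hv⟩

end BoundedSubspace

section Evolution

variable {E : Type*} [NormedAddCommGroup E] [NormedSpace ℝ E]

/-- The operators `P n m` are the transitions from time `m` to time `n` of a nonautonomous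
volume-preserving linear dynamical system whose one-step operators have norm at most `M`. -/
structure IsUnimodularEvolution (P : ℤ → ℤ → E →L[ℝ] E) (M : ℝ) : Prop where
  self n : P n n = 1
  mul n m k : P n m * P m k = P n k
  det n m : (P n m).det = 1
  norm_succ_le n : ‖P (n + 1) n‖ ≤ M

/-- The norms of the transitions grow at least like `c * ρ ^ L` in the elapsed time `L`, both
forwards and backwards. -/
def HasExponentialGrowth (P : ℤ → ℤ → E →L[ℝ] E) (c ρ : ℝ) : Prop :=
  ∀ n m, c * ρ ^ (n - m).natAbs < ‖P n m‖

variable {P : ℤ → ℤ → E →L[ℝ] E} {M c ρ : ℝ}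

lemma HasExponentialGrowth.reverse (hP : HasExponentialGrowth P c ρ) :
    HasExponentialGrowth (fun n m => P (-n) (-m)) c ρ := fun n m => by
  rw [show (n - m).natAbs = (-n - -m).natAbs by omega]
  exact hP (-n) (-m)

lemma HasExponentialGrowth.boundedSubspace_ne_top [CompleteSpace E]
    (hP : HasExponentialGrowth P c ρ) (hc : 0 < c) (hρ : 1 < ρ) :
    boundedSubspace atTop (fun n => P n 0) ≠ ⊤ := by
  refine boundedSubspace_atTop_ne_top fun C => ?_
  obtain ⟨n, hn⟩ := (eventually_add_mul_le_mul_pow hc hρ C 0).exists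
  exact ⟨n, by simpa using hn.trans_lt (by simpa using hP n 0)⟩

namespace IsUnimodularEvolution

lemma apply_apply (hP : IsUnimodularEvolution P M) (n m k : ℤ) (w : E) :
    P n m (P m k w) = P n k w :=
  congr($(hP.mul n m k) w)

lemma apply_ne_zero (hP : IsUnimodularEvolution P M) (n m : ℤ) {w : E} (hw : w ≠ 0) :
    P n m w ≠ 0 := fun h => hw <| by
  simpa [h, hP.self] using (hP.apply_apply m n m w).symm

end IsUnimodularEvolution

end Evolution

section PlanarEvolution

attribute [local instance] FiniteDimensional.of_fact_finrank_eq_two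

variable {E : Type*} [NormedAddCommGroup E] [InnerProductSpace ℝ E] [Fact (finrank ℝ E = 2)]
  {P : ℤ → ℤ → E →L[ℝ] E} {M c ρ D : ℝ}

namespace IsUnimodularEvolution

lemma one_le (hP : IsUnimodularEvolution P M) : 1 ≤ M :=
  (one_le_opNorm (hP.det (0 + 1) 0)).trans (hP.norm_succ_le 0)

lemma norm_symm (hP : IsUnimodularEvolution P M) (n m : ℤ) : ‖P n m‖ = ‖P m n‖ :=
  le_antisymm
    (opNorm_le_of_mul_eq_one (hP.det m n) ((hP.mul m n m).trans (hP.self m)))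
    (opNorm_le_of_mul_eq_one (hP.det n m) ((hP.mul n m n).trans (hP.self n)))

lemma reverse (hP : IsUnimodularEvolution P M) :
    IsUnimodularEvolution (fun n m => P (-n) (-m)) M where
  self n := hP.self (-n)
  mul n m k := hP.mul (-n) (-m) (-k)
  det n m := hP.det (-n) (-m)
  norm_succ_le n := by
    rw [hP.norm_symm]
    simpa using hP.norm_succ_le (-(n + 1))

lemma norm_add_natCast_le (hP : IsUnimodularEvolution P M) (m : ℤ) (L : ℕ) :
    ‖P (m + L) m‖ ≤ M ^ L := by
  have := hP.one_le
  have : Nontrivial E := nontrivial_of_finrank_eq_succ (R := ℝ) (n := 1) Fact.out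
  induction L with
  | zero => simp [hP.self]
  | succ L ih =>
    rw [← hP.mul _ (m + L) m, pow_succ']
    refine (norm_mul_le _ _).trans ?_
    gcongr
    rw [Nat.cast_succ, ← add_assoc]
    exact hP.norm_succ_le _

lemma norm_le (hP : IsUnimodularEvolution P M) (n m : ℤ) : ‖P n m‖ ≤ M ^ (n - m).natAbs := by
  rcases le_total m n with h | h
  · obtain ⟨L, rfl⟩ := Int.le.dest h
    simpa using hP.norm_add_natCast_le m L
  · obtain ⟨L, rfl⟩ := Int.le.dest h
    rw [hP.norm_symm]
    simpa using hP.norm_add_natCast_le n L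

lemma hasBoundedRatio (hP : IsUnimodularEvolution P M) (w : E) :
    HasBoundedRatio (fun j => ‖P j 0 w‖) M := fun i j => by
  simp only [← hP.apply_apply i j 0 w]
  exact (P i j).le_of_opNorm_le (hP.norm_le i j) _

lemma areaForm_apply_apply (hP : IsUnimodularEvolution P M) (o : Orientation ℝ E (Fin 2))
    (n m : ℤ) (v z : E) : o.areaForm (P n m v) (P n m z) = o.areaForm v z := by
  rw [areaForm_map_eq_det_mul, hP.det, one_mul]

lemma abs_projCoeff_le (hP : IsUnimodularEvolution P M) (o : Orientation ℝ E (Fin 2)) {m : ℤ}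
    {v : E} {t : ℝ} (ht : 0 < t) (z : E) {L : ℕ} (hlow : ∀ j ≤ L, t ≤ ‖P (m + j) m v‖) :
    |projCoeff (P (m + L) m v) (P (m + L) m z)|
      ≤ |projCoeff v z| + L * (M * |o.areaForm v z| / t ^ 2) := by
  induction L with
  | zero => simp [hP.self]
  | succ L ih =>
    have h₀ : t ≤ ‖P (m + L) m v‖ := hlow L L.le_succ
    have h₁ : t ≤ ‖P (m + L + 1) m v‖ := by simpa [add_assoc] using hlow (L + 1) le_rfl
    have hstep := abs_projCoeff_map_le o (P (m + L + 1) (m + L))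
      (norm_pos_iff.1 (ht.trans_le h₀))
      (by rw [hP.apply_apply]; exact norm_pos_iff.1 (ht.trans_le h₁)) (P (m + L) m z)
    rw [hP.apply_apply, hP.apply_apply, hP.areaForm_apply_apply] at hstep
    rw [Nat.cast_succ, Nat.cast_succ, ← add_assoc]
    calc |projCoeff (P (m + L + 1) m v) (P (m + L + 1) m z)|
        ≤ (|projCoeff v z| + L * (M * |o.areaForm v z| / t ^ 2))
            + M * |o.areaForm v z| / (t * t) := by
          refine hstep.trans (add_le_add (ih fun j hj => hlow j (hj.trans L.le_succ)) ?_)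
          have := hP.one_le
          gcongr
          exact hP.norm_succ_le (m + L)
      _ = |projCoeff v z| + (L + 1) * (M * |o.areaForm v z| / t ^ 2) := by ring

lemma norm_le_of_plateau (hP : IsUnimodularEvolution P M) {m : ℤ} {v : E} {t : ℝ} (ht : 0 < t)
    {L : ℕ} (hlow : ∀ j ≤ L, t ≤ ‖P (m + j) m v‖) (hv : ‖v‖ ≤ D * t)
    (hLv : ‖P (m + L) m v‖ ≤ D * t) :
    ‖P (m + L) m‖ ≤ 2 * D + D ^ 2 * M * L := by
  obtain ⟨o⟩ := nonempty_orientation (E := E)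
  have hM := hP.one_le
  have htv : t ≤ ‖v‖ := by simpa [hP.self] using hlow 0 L.zero_le
  have hD : 0 ≤ D := nonneg_of_mul_nonneg_left ((norm_nonneg v).trans hv) ht
  have hLt : t ≤ ‖P (m + L) m v‖ := hlow L le_rfl
  refine ContinuousLinearMap.opNorm_le_bound _ (by positivity) fun z => ?_
  have harea : |o.areaForm v z| ≤ D * t * ‖z‖ :=
    (o.abs_areaForm_le v z).trans (by gcongr)
  have hcoeff : |projCoeff v z| ≤ ‖z‖ / t := by
    rw [le_div_iff₀ ht]
    exact (mul_le_mul_of_nonneg_left htv (abs_nonneg _)).trans (abs_projCoeff_mul_norm_le v z)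
  have hbound := norm_le_abs_projCoeff_mul_add o (norm_pos_iff.1 (ht.trans_le hLt))
    (P (m + L) m z)
  rw [hP.areaForm_apply_apply] at hbound
  calc ‖P (m + L) m z‖
      ≤ (‖z‖ / t + L * (M * (D * t * ‖z‖) / t ^ 2)) * (D * t) + D * t * ‖z‖ / t := by
        refine hbound.trans ?_
        gcongr
        exact (hP.abs_projCoeff_le o ht z hlow).trans (by gcongr)
    _ = (2 * D + D ^ 2 * M * L) * ‖z‖ := by
        field_simp
        ring

lemma eventually_hasPlateauBound (hc : 0 < c) (hρ : 1 < ρ) (M D : ℝ) :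
    ∀ᶠ K : ℕ in atTop, ∀ P : ℤ → ℤ → E →L[ℝ] E, IsUnimodularEvolution P M →
      HasExponentialGrowth P c ρ → ∀ w, HasPlateauBound (fun j => ‖P j 0 w‖) D K := by
  filter_upwards [eventually_forall_ge_atTop.2
    (eventually_add_mul_le_mul_pow hc hρ (2 * D) (D ^ 2 * M))]
    with K hK P hP hgrowth w t ht m n hmn hlow hm hn
  by_contra! hlong
  obtain ⟨L, rfl⟩ := Int.le.dest hmn
  refine (hgrowth (m + L) m).not_ge ?_
  rw [add_sub_cancel_left, Int.natAbs_natCast]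
  refine (hP.norm_le_of_plateau ht (fun j hj => ?_) hm ?_).trans (hK L (by omega))
  · rw [hP.apply_apply]
    exact hlow _ ⟨by omega, by omega⟩
  · rwa [hP.apply_apply]

lemma exists_hasDoublingWindow (hc : 0 < c) (hρ : 1 < ρ) (M : ℝ) :
    ∃ N > 0, ∀ P : ℤ → ℤ → E →L[ℝ] E, IsUnimodularEvolution P M →
      HasExponentialGrowth P c ρ → ∀ w ≠ 0, HasDoublingWindow (fun j => ‖P j 0 w‖) N := by
  obtain ⟨K, hK⟩ := (eventually_hasPlateauBound (E := E) hc hρ M M).exists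
  obtain ⟨N, hN, hN0⟩ := ((eventually_hasPlateauBound (E := E) hc hρ M (2 * M ^ K)).and
    (eventually_gt_atTop 0)).exists
  exact ⟨N, hN0, fun P hP hgrowth w hw => (hP.hasBoundedRatio w).hasDoublingWindow hP.one_le
    (fun j => norm_pos_iff.2 (hP.apply_ne_zero j 0 hw)) (hK P hP hgrowth w) (hN P hP hgrowth w)⟩

lemma boundedSubspace_ne_bot (hP : IsUnimodularEvolution P M) {N : ℕ}
    (hN : ∀ w ≠ 0, HasDoublingWindow (fun j => ‖P j 0 w‖) N) :
    boundedSubspace atTop (fun n => P n 0) ≠ ⊥ := by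
  refine boundedSubspace_atTop_ne_bot (C := M ^ N) fun n => ?_
  obtain ⟨w, hw, hPw⟩ := exists_norm_eq_one_norm_map_le_one (hP.det n 0)
  have hw0 : w ≠ 0 := norm_ne_zero_iff.1 (hw.trans_ne one_ne_zero)
  refine ⟨w, hw, fun j hj => ?_⟩
  simpa [hP.self, hw, hPw] using (hN w hw0).le_pow_mul_max (hP.hasBoundedRatio w) hP.one_le
    (fun j => norm_pos_iff.2 (hP.apply_ne_zero j 0 hw0)) (Nat.cast_nonneg j) (Nat.cast_le.2 hj)

lemma norm_le_of_mem_boundedSubspace (hP : IsUnimodularEvolution P M) {N : ℕ}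
    (hN : ∀ w ≠ 0, HasDoublingWindow (fun j => ‖P j 0 w‖) N) {w : E}
    (hw : w ∈ boundedSubspace atTop (fun n => P n 0)) (n : ℕ) :
    ‖P n 0 w‖ ≤ M ^ N * ‖w‖ / 2 ^ (n / N) := by
  rcases eq_or_ne w 0 with rfl | hw0
  · simp
  obtain ⟨C, hC⟩ := mem_boundedSubspace_atTop_int.1 hw
  simpa [hP.self] using (hN w hw0).le_div_two_pow_of_bounded (hP.hasBoundedRatio w) hP.one_le
    (fun j => norm_pos_iff.2 (hP.apply_ne_zero j 0 hw0))
    (fun j hj => Int.toNat_of_nonneg hj ▸ hC j.toNat) n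

lemma exists_finrank_eq_one_and_norm_le (hc : 0 < c) (hρ : 1 < ρ) (M : ℝ) :
    ∃ C r : ℝ, 1 < r ∧ ∀ P : ℤ → ℤ → E →L[ℝ] E, IsUnimodularEvolution P M →
      HasExponentialGrowth P c ρ → finrank ℝ (boundedSubspace atTop fun n => P n 0) = 1 ∧
        ∀ w ∈ boundedSubspace atTop (fun n => P n 0), ∀ n : ℕ, ‖P n 0 w‖ ≤ C * ‖w‖ / r ^ n := by
  obtain ⟨N, hN0, hN⟩ := exists_hasDoublingWindow (E := E) hc hρ M
  obtain ⟨r, hr, hrN⟩ := exists_one_lt_forall_pow_le one_lt_two hN0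
  refine ⟨2 * M ^ N, r, hr, fun P hP hgrowth => ⟨?_, fun w hw n => ?_⟩⟩
  · have hpos := Submodule.one_le_finrank_iff.2 (hP.boundedSubspace_ne_bot (hN P hP hgrowth))
    have hlt := Submodule.finrank_lt (hgrowth.boundedSubspace_ne_top hc hρ)
    rw [Fact.out (p := finrank ℝ E = 2)] at hlt
    omega
  · have := hP.one_le
    refine (hP.norm_le_of_mem_boundedSubspace (hN P hP hgrowth) hw n).trans ?_
    rw [div_le_div_iff₀ (by positivity) (by positivity)]
    calc M ^ N * ‖w‖ * r ^ n ≤ M ^ N * ‖w‖ * (2 * 2 ^ (n / N)) := by gcongr; exact hrN n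
      _ = 2 * M ^ N * ‖w‖ * 2 ^ (n / N) := by ring

end IsUnimodularEvolution

end PlanarEvolution

section Iterates

variable {β : ℝ} {B : ℝ → M2}

lemma fwdIter_succ_right (n : ℕ) (x : ℝ) :
    fwdIter β B (n + 1) x = fwdIter β B n (x + β) * B x := by
  induction n with
  | zero => simp [fwdIter]
  | succ n ih =>
    rw [fwdIter, ih, fwdIter, Matrix.mul_assoc]
    congr 2
    push_cast
    ring

lemma fwdIter_add_one_base (hper : Function.Periodic B 1) (n : ℕ) (x : ℝ) :
    fwdIter β B n (x + 1) = fwdIter β B n x := by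
  induction n with
  | zero => rfl
  | succ n ih => rw [fwdIter, fwdIter, ih, add_right_comm, hper]

lemma det_fwdIter (hdet : ∀ x, (B x).det = 1) (n : ℕ) (x : ℝ) : (fwdIter β B n x).det = 1 := by
  induction n with
  | zero => simp [fwdIter]
  | succ n ih => rw [fwdIter, Matrix.det_mul, ih, hdet, one_mul]

lemma cocycleIter_natCast (n : ℕ) (x : ℝ) : cocycleIter β B n x = fwdIter β B n x := by
  simp [cocycleIter]

lemma cocycleIter_neg_natCast (n : ℕ) (x : ℝ) :
    cocycleIter β B (-n) x = (fwdIter β B n (x - n * β))⁻¹ := by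
  rcases n.eq_zero_or_pos with rfl | hn
  · simp [cocycleIter, fwdIter]
  · rw [cocycleIter, if_neg (by omega)]
    simp [sub_eq_add_neg]

lemma cocycleIter_zero (x : ℝ) : cocycleIter β B 0 x = 1 :=
  cocycleIter_natCast 0 x

lemma cocycleIter_one (x : ℝ) : cocycleIter β B 1 x = B x := by
  simp [cocycleIter, fwdIter]

lemma cocycleIter_add_one_base (hper : Function.Periodic B 1) (n : ℤ) (x : ℝ) :
    cocycleIter β B n (x + 1) = cocycleIter β B n x := by
  simp only [cocycleIter, add_right_comm x 1, fwdIter_add_one_base hper]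

lemma det_cocycleIter (hdet : ∀ x, (B x).det = 1) (n : ℤ) (x : ℝ) :
    (cocycleIter β B n x).det = 1 := by
  unfold cocycleIter
  split_ifs
  · exact det_fwdIter hdet _ _
  · rw [Matrix.det_nonsing_inv, det_fwdIter hdet, Ring.inverse_one]

lemma cocycleIter_add_one (hB : ∀ x, IsUnit (B x).det) (n : ℤ) (x : ℝ) :
    cocycleIter β B (n + 1) x = B (x + n * β) * cocycleIter β B n x := by
  obtain ⟨k, rfl | rfl⟩ := n.eq_nat_or_neg
  · rw [← Nat.cast_succ, cocycleIter_natCast, cocycleIter_natCast, fwdIter, Int.cast_natCast]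
  · cases k with
    | zero => simp [cocycleIter, fwdIter]
    | succ k =>
      have hbase : x - (k + 1 : ℕ) * β + β = x - k * β := by push_cast; ring
      rw [show -((k + 1 : ℕ) : ℤ) + 1 = -k by push_cast; ring, cocycleIter_neg_natCast,
        cocycleIter_neg_natCast, fwdIter_succ_right, Matrix.mul_inv_rev, ← Matrix.mul_assoc,
        hbase, Int.cast_neg, Int.cast_natCast, neg_mul, ← sub_eq_add_neg,
        Matrix.mul_nonsing_inv _ (hB _), Matrix.one_mul]

lemma cocycleIter_add (hB : ∀ x, IsUnit (B x).det) (n m : ℤ) (x : ℝ) :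
    cocycleIter β B (n + m) x = cocycleIter β B n (x + m * β) * cocycleIter β B m x := by
  have hbase (n : ℤ) : x + (n + m : ℤ) * β = x + m * β + n * β := by push_cast; ring
  induction n using Int.induction_on with
  | zero => rw [zero_add, cocycleIter_zero, Matrix.one_mul]
  | succ n ih =>
    rw [add_right_comm, cocycleIter_add_one hB, ih, cocycleIter_add_one hB, hbase,
      Matrix.mul_assoc]
  | pred n ih =>
    refine ((Matrix.isUnit_iff_isUnit_det _).2 (hB (x + (-n - 1 + m : ℤ) * β))).mul_left_cancel ?_
    rw [← cocycleIter_add_one hB, ← Matrix.mul_assoc, hbase, ← cocycleIter_add_one hB,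
      add_right_comm, sub_add_cancel, ih]

end Iterates

section CocycleEvolution

-- This provides the instance `Fact (finrank ℝ (EuclideanSpace ℝ (Fin 2)) = 2)`.
open scoped EuclideanSpace

/-- The transition operators along the orbit of `x` under translation by `β`: the time-`m` state
lives over `x + m * β`. -/
def cocycleEvolution (β : ℝ) (B : ℝ → M2) (x : ℝ) (n m : ℤ) :
    EuclideanSpace ℝ (Fin 2) →L[ℝ] EuclideanSpace ℝ (Fin 2) :=
  toEuclideanCLM (𝕜 := ℝ) (cocycleIter β B (n - m) (x + m * β))

/-- The vectors `w` for which `cocycleIter β B n x *ᵥ w` stays bounded as `n` tends to `l`. -/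
def boundedVectors (β : ℝ) (B : ℝ → M2) (l : Filter ℤ) (x : ℝ) : Submodule ℝ (Fin 2 → ℝ) :=
  (boundedSubspace l fun n => cocycleEvolution β B x n 0).map
    (WithLp.linearEquiv 2 ℝ (Fin 2 → ℝ)).toLinearMap

variable {β : ℝ} {B : ℝ → M2} {l : Filter ℤ} {M c ρ : ℝ}

lemma mem_boundedVectors {x : ℝ} {w : Fin 2 → ℝ} : w ∈ boundedVectors β B l x ↔
    WithLp.toLp 2 w ∈ boundedSubspace l fun n => cocycleEvolution β B x n 0 :=
  Submodule.mem_map_equiv _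

lemma finrank_boundedVectors (x : ℝ) : finrank ℝ (boundedVectors β B l x) =
    finrank ℝ (boundedSubspace l fun n => cocycleEvolution β B x n 0) :=
  LinearEquiv.finrank_map_eq _ _

lemma det_toEuclideanCLM (A : M2) : (toEuclideanCLM (𝕜 := ℝ) A).det = A.det :=
  LinearMap.det_toLpLin 2 A

lemma cocycleEvolution_zero_right (x : ℝ) (n : ℤ) :
    cocycleEvolution β B x n 0 = toEuclideanCLM (𝕜 := ℝ) (cocycleIter β B n x) := by
  simp [cocycleEvolution]

lemma isUnimodularEvolution_cocycleEvolution (hdet : ∀ x, (B x).det = 1)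
    (hM : ∀ x, opNorm (B x) ≤ M) (x : ℝ) :
    IsUnimodularEvolution (cocycleEvolution β B x) M where
  self n := by rw [cocycleEvolution, sub_self, cocycleIter_zero, map_one]
  mul n m k := by
    have hbase : x + k * β + (m - k : ℤ) * β = x + m * β := by push_cast; ring
    rw [cocycleEvolution, cocycleEvolution, cocycleEvolution, ← map_mul,
      ← sub_add_sub_cancel n m k, cocycleIter_add (fun x => by simp [hdet]), hbase]
  det n m := (det_toEuclideanCLM _).trans (det_cocycleIter hdet _ _)
  norm_succ_le n := by
    rw [cocycleEvolution, add_sub_cancel_left, cocycleIter_one]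
    exact hM _

lemma boundedVectors_add_one_base (hper : Function.Periodic B 1) (x : ℝ) :
    boundedVectors β B l (x + 1) = boundedVectors β B l x := by
  simp only [boundedVectors, cocycleEvolution_zero_right, cocycleIter_add_one_base hper]

lemma map_boundedVectors (hdet : ∀ x, (B x).det = 1) (hl : map (· + 1) l = l) (x : ℝ) :
    (boundedVectors β B l x).map (toLin' (B x)) = boundedVectors β B l (x + β) := by
  have hB (x : ℝ) : IsUnit (B x).det := by simp [hdet]
  have hcomap : boundedVectors β B l x =
      (boundedVectors β B l (x + β)).comap (toLin' (B x)) := by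
    ext w
    rw [Submodule.mem_comap, toLin'_apply, mem_boundedVectors, mem_boundedVectors]
    conv_lhs => rw [← hl, ← boundedSubspace_comp]
    simp only [mem_boundedSubspace, Function.comp_def, cocycleEvolution_zero_right,
      cocycleIter_add hB _ 1, cocycleIter_one, map_mul, mul_apply_eq_comp,
      toEuclideanCLM_toLp, Int.cast_one, one_mul]
  rw [hcomap, Submodule.map_comap_eq_of_surjective]
  exact Matrix.mulVec_surjective_iff_isUnit.2 ((Matrix.isUnit_iff_isUnit_det _).2 (hB x))

lemma norm_toLp (w : Fin 2 → ℝ) : ‖WithLp.toLp 2 w‖ = vnorm w :=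
  rfl

lemma norm_cocycleEvolution_toLp (n : ℤ) (x : ℝ) (w : Fin 2 → ℝ) :
    ‖cocycleEvolution β B x n 0 (WithLp.toLp 2 w)‖ = vnorm (cocycleIter β B n x *ᵥ w) := by
  rw [cocycleEvolution_zero_right, toEuclideanCLM_toLp, norm_toLp]

lemma exists_finrank_boundedVectors_eq_one_and_vnorm_le (hdet : ∀ x, (B x).det = 1)
    (hM : ∀ x, opNorm (B x) ≤ M) (hc : 0 < c) (hρ : 1 < ρ)
    (hgrowth : ∀ n x, c * ρ ^ n.natAbs < opNorm (cocycleIter β B n x)) :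
    ∃ C r : ℝ, 1 < r ∧ ∀ x,
      (finrank ℝ (boundedVectors β B atTop x) = 1 ∧ ∀ w ∈ boundedVectors β B atTop x, ∀ n : ℕ,
        vnorm (cocycleIter β B n x *ᵥ w) ≤ C * vnorm w / r ^ n) ∧
      (finrank ℝ (boundedVectors β B atBot x) = 1 ∧ ∀ w ∈ boundedVectors β B atBot x, ∀ n : ℕ,
        vnorm (cocycleIter β B (-n) x *ᵥ w) ≤ C * vnorm w / r ^ n) := by
  obtain ⟨C, r, hr, hCr⟩ := IsUnimodularEvolution.exists_finrank_eq_one_and_norm_le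
    (E := EuclideanSpace ℝ (Fin 2)) hc hρ M
  have hP := isUnimodularEvolution_cocycleEvolution (β := β) hdet hM
  have hPgrowth (x : ℝ) : HasExponentialGrowth (cocycleEvolution β B x) c ρ :=
    fun n m => hgrowth (n - m) (x + m * β)
  refine ⟨C, r, hr, fun x => ?_⟩
  have hforward := hCr _ (hP x) (hPgrowth x)
  have hbackward := hCr _ (hP x).reverse (hPgrowth x).reverse
  have hneg : boundedSubspace atTop (fun n => cocycleEvolution β B x (-n) (-0))
      = boundedSubspace atBot fun n => cocycleEvolution β B x n 0 :=
    boundedSubspace_atTop_comp_neg fun n => cocycleEvolution β B x n 0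
  rw [hneg] at hbackward
  simp only [finrank_boundedVectors, mem_boundedVectors, ← norm_cocycleEvolution_toLp]
  exact ⟨⟨hforward.1, fun w => hforward.2 (WithLp.toLp 2 w)⟩,
    hbackward.1, fun w => hbackward.2 (WithLp.toLp 2 w)⟩

lemma isUH_of_exponential_growth (hper : Function.Periodic B 1) (hdet : ∀ x, (B x).det = 1)
    (hM : ∀ x, opNorm (B x) ≤ M) (hc : 0 < c) (hρ : 1 < ρ)
    (hgrowth : ∀ n x, c * ρ ^ n.natAbs < opNorm (cocycleIter β B n x)) : IsUH β B := by
  obtain ⟨C, r, hr, hCr⟩ :=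
    exists_finrank_boundedVectors_eq_one_and_vnorm_le hdet hM hc hρ hgrowth
  have hlt (k : ℕ) : C * 1 / r ^ k < (|C| + 1) / r ^ k := by
    gcongr
    linarith [le_abs_self C]
  exact ⟨boundedVectors β B atTop, boundedVectors β B atBot, |C| + 1, r, by positivity, hr,
    fun x => ⟨(hCr x).1.1, (hCr x).2.1⟩,
    fun x => ⟨boundedVectors_add_one_base hper x, boundedVectors_add_one_base hper x⟩,
    fun x => ⟨map_boundedVectors hdet (OrderIso.addRight 1).map_atTop x,
      map_boundedVectors hdet (OrderIso.addRight 1).map_atBot x⟩,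
    fun x n _ => ⟨fun w hw hw1 => (hw1 ▸ (hCr x).1.2 w hw n).trans_lt (hlt n),
      fun w hw hw1 => (hw1 ▸ (hCr x).2.2 w hw n).trans_lt (hlt n)⟩⟩

lemma exists_vnorm_eq_one_of_finrank_eq_one {s : Submodule ℝ (Fin 2 → ℝ)}
    (hs : finrank ℝ s = 1) : ∃ w ∈ s, vnorm w = 1 := by
  obtain ⟨w, hw, hw0⟩ := s.exists_mem_ne_zero_of_ne_bot (Submodule.one_le_finrank_iff.1 hs.ge)
  refine ⟨(vnorm w)⁻¹ • w, s.smul_mem _ hw, ?_⟩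
  exact norm_smul_inv_norm (𝕜 := ℝ) (x := WithLp.toLp 2 w) (by simpa using hw0)

lemma inv_lt_opNorm {A : M2} (hA : A.det = 1) {w : Fin 2 → ℝ} (hw : vnorm w = 1) {ε : ℝ}
    (hε : vnorm (A *ᵥ w) < ε) : ε⁻¹ < opNorm A := by
  have hdet := (det_toEuclideanCLM A).trans hA
  have hpos : 0 < opNorm A := one_pos.trans_le (one_le_opNorm hdet)
  rw [inv_lt_iff_one_lt_mul₀ ((norm_nonneg _).trans_lt hε)]
  calc 1 = vnorm w := hw.symm
    _ ≤ opNorm A * vnorm (A *ᵥ w) := norm_le_opNorm_mul_norm_map hdet _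
    _ < opNorm A * ε := mul_lt_mul_of_pos_left hε hpos

lemma exponential_growth_of_isUH (hdet : ∀ x, (B x).det = 1) (h : IsUH β B) :
    ∃ c > (0 : ℝ), ∃ ρ > (1 : ℝ), ∀ n : ℤ, ∀ x : ℝ,
      c * ρ ^ n.natAbs < opNorm (cocycleIter β B n x) := by
  obtain ⟨s, u, c, ρ, hc, hρ, hrank, -, -, hdecay⟩ := h
  refine ⟨min c⁻¹ 2⁻¹, by positivity, ρ, hρ, fun n x => ?_⟩
  have hdetn := det_cocycleIter (β := β) hdet n x
  have hgrowth {w : Fin 2 → ℝ} (hw : vnorm w = 1)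
      (hcontr : vnorm (cocycleIter β B n x *ᵥ w) < c / ρ ^ n.natAbs) :
      min c⁻¹ 2⁻¹ * ρ ^ n.natAbs < opNorm (cocycleIter β B n x) :=
    calc min c⁻¹ 2⁻¹ * ρ ^ n.natAbs ≤ (c / ρ ^ n.natAbs)⁻¹ := by
          rw [inv_div, div_eq_inv_mul]
          gcongr
          exact min_le_left _ _
      _ < opNorm (cocycleIter β B n x) := inv_lt_opNorm hdetn hw hcontr
  obtain ⟨w, hws, hw⟩ := exists_vnorm_eq_one_of_finrank_eq_one (hrank x).1
  obtain ⟨v, hvu, hv⟩ := exists_vnorm_eq_one_of_finrank_eq_one (hrank x).2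
  rcases eq_or_ne n 0 with rfl | hn
  · have hlt := inv_lt_opNorm hdetn hw (ε := 2) (by simp [cocycleIter_zero, hw])
    simpa using (min_le_right _ _).trans_lt hlt
  obtain ⟨k, rfl | rfl⟩ := n.eq_nat_or_neg
  · exact hgrowth hw (by simpa using (hdecay x k (by omega)).1 w hws hw)
  · exact hgrowth hv (by simpa using (hdecay x k (by omega)).2 v hvu hv)

lemma continuous_opNorm : Continuous opNorm :=
  LinearMap.continuous_of_finiteDimensional
    (toEuclideanCLM (n := Fin 2) (𝕜 := ℝ)).toAlgEquiv.toLinearMap |>.norm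

lemma bddAbove_range_opNorm (hcont : Continuous B) (hper : Function.Periodic B 1) :
    BddAbove (Set.range fun x => opNorm (B x)) :=
  ((hper.comp opNorm).isBounded_of_continuous one_ne_zero (continuous_opNorm.comp hcont)).bddAbove

end CocycleEvolution

theorem uh_iff_uniform_exponential_growth_general (β : ℝ) (B : ℝ → M2)
    (hbdd : BddAbove (Set.range fun x => opNorm (B x))) (hper : Function.Periodic B 1)
    (hdet : ∀ x, (B x).det = 1) :
    IsUH β B ↔ ∃ c > (0 : ℝ), ∃ ρ > (1 : ℝ), ∀ n : ℤ, ∀ x : ℝ,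
      c * ρ ^ n.natAbs < opNorm (cocycleIter β B n x) := by
  obtain ⟨M, hM⟩ := hbdd
  exact ⟨exponential_growth_of_isUH hdet, fun ⟨_, hc, _, hρ, hgrowth⟩ =>
    isUH_of_exponential_growth hper hdet (Set.forall_mem_range.1 hM) hc hρ hgrowth⟩

/-- Uniform hyperbolicity is equivalent to uniform exponential growth of the cocycle
iterates: there are c > 0 and ρ > 1 with ‖B_n(x)‖ > c ρ^{|n|} for all n ∈ ℤ, x ∈ ℝ/ℤ. -/
theorem uh_iff_uniform_exponential_growth (β : ℝ) (B : ℝ → M2)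
    (hcont : Continuous B) (hper : Function.Periodic B 1)
    (hdet : ∀ x, (B x).det = 1) :
    IsUH β B ↔ ∃ c > (0 : ℝ), ∃ ρ > (1 : ℝ), ∀ n : ℤ, ∀ x : ℝ,
      c * ρ ^ n.natAbs < opNorm (cocycleIter β B n x) :=
  uh_iff_uniform_exponential_growth_general β B (bddAbove_range_opNorm hcont hper) hper hdet
end
end

section
/- Fix constants C, c > 0 and a small β > 0. There is a constant C′ > 0 such that for all sufficiently small r ∈ (0,1) and all sufficiently large l₀ (with l₀ ≫ r⁻¹), the following holds. Let I = B(0,r), let l : I → ℝ be C² with l(x) > l₀ and |l^{(m)}(x)| < l(x)^{1+β} for m = 1,2. Let f₁ : I → ℝ/πℤ be of type I₊ with its zero at 0, let f₂ : I → ℝ/πℤ be of type I₋ with its zero at d, where 0 ≤ d ≤ 2r/3, and set f = arctan(l²·tan f₁) − π/2 + f₂ : I → ℝ/πℤ. Let X = {x ∈ I : |f(x)| = inf_{y∈I} |f(y)|} (distances measured in ℝ/πℤ); then X consists of at most two points, X = {x₁, x₂} with x₁ ≤ x₂, and: (1) |x₁| < C′ l₀^{−3/4} and |x₂ − d| < C′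 l₀^{−3/4}; (2) if f(x₁) = f(x₂) = 0 then 0 < x₁ ≤ x₂ < d; (3) if f(x₁) = f(x₂) ≠ 0 then x₁ = x₂. -/
open scoped Real
open Matrix

noncomputable section

/-- Distance from a to 0 in ℝ/πℤ (we work with real-valued lifts of ℝP¹-valued functions). -/
def pDist (a : ℝ) : ℝ := ‖(a : AddCircle π)‖

/-- A C² function f (a real lift of a function into ℝ/πℤ) on the interval I = B(x̄, r) is of
type I with (unique) zero x₀: C²-norm bounded by C, exactly one zero (mod π), located in (1/3)I;
f′ has at most one zero on I while |f′| > r² on B(x₀, r/2); and |f| > c r³ on the part of I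
where f′·f′(x₀) ≤ 0. -/
def TypeOne (C c r xb x₀ : ℝ) (f : ℝ → ℝ) : Prop :=
  ContDiffOn ℝ 2 f (Metric.closedBall xb r) ∧
  (∀ x ∈ Metric.closedBall xb r,
      |f x| < C ∧ |deriv f x| < C ∧ |iteratedDeriv 2 f x| < C) ∧
  x₀ ∈ Metric.closedBall xb (r / 3) ∧
  ((f x₀ : AddCircle π) = 0) ∧
  (∀ x ∈ Metric.closedBall xb r, ((f x : AddCircle π) = 0) → x = x₀) ∧
  (∀ x ∈ Metric.closedBall xb r, ∀ y ∈ Metric.closedBall xb r,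
      deriv f x = 0 → deriv f y = 0 → x = y) ∧
  (∀ x ∈ Metric.closedBall x₀ (r / 2), r ^ 2 < |deriv f x|) ∧
  (∀ x ∈ Metric.closedBall xb r, deriv f x * deriv f x₀ ≤ 0 → c * r ^ 3 < pDist (f x))

/-- Type I₊ : type I with f′(x₀) > 0. -/
def TypeOnePlus (C c r xb x₀ : ℝ) (f : ℝ → ℝ) : Prop :=
  TypeOne C c r xb x₀ f ∧ 0 < deriv f x₀

/-- Type I₋ : type I with f′(x₀) < 0. -/
def TypeOneMinus (C c r xb x₀ : ℝ) (f : ℝ → ℝ) : Prop :=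
  TypeOne C c r xb x₀ f ∧ deriv f x₀ < 0

/-!
Write `U = f₁`, `V = -f₂` and `W = l⁻²`, so that `U` and `V` increase through their zeros `0` and
`d`. Then `f = μ` in `ℝ/πℤ` exactly where the function `tan U * tan (V + μ) + W` vanishes, and the
latter, unlike `f`, is controlled in `C²` uniformly in `l`. Put `a = l₀⁻¹` and `δ = l₀ ^ (-3/4)`.

If `δ ≤ d`, take `μ = 0`. The function is positive off `(0, d)`, negative on `[a, d - a]` where
`-tan U * tan V` exceeds `a²`, and monotone on the two remaining intervals of length `a`. So `f` has
exactly two zeros, one in each of these intervals.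

If `d < δ`, testing at `d + a` shows that the minimum of `|f|` is `O(a)`, which puts all minimizers
within `δ` of `d`. Near `0` and `d` the product `tan U * tan (V + μ)` has second derivative close to
`2 * (tan U)' * (tan V)' > 0`, so the function is strictly convex there for every small `μ`. Hence
it has at most two zeros for `μ = 0`. If `f` has no zero, moving `μ` from `0` to the value `f` takes
at a minimizer keeps the function nonnegative, so its zeros are minima and strict convexity leaves
only one point for each of the two values `±μ`.
-/

open Set Filter Topology

section Calculus

variable {a b m K : ℝ} {g g' : ℝ → ℝ}

lemma abs_sub_le_mul_abs_sub (hg : ContinuousOn g (Icc a b)) (hd : DifferentiableOn ℝ g (Ioo a b))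
    (hK : ∀ x ∈ Ioo a b, |deriv g x| ≤ K) {x y : ℝ} (hx : x ∈ Icc a b) (hy : y ∈ Icc a b) :
    |g y - g x| ≤ K * |y - x| := by
  wlog hxy : x ≤ y generalizing x y
  · rw [abs_sub_comm, abs_sub_comm y]
    exact this hy hx (le_of_not_ge hxy)
  rw [← interior_Icc] at hd hK
  rw [abs_of_nonneg (sub_nonneg.2 hxy), abs_le]
  constructor
  · simpa only [neg_mul] using (convex_Icc a b).mul_sub_le_image_sub_of_le_deriv hg hd
      (fun z hz ↦ (abs_le.1 (hK z hz)).1) x hx y hy hxy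
  · exact (convex_Icc a b).image_sub_le_mul_sub_of_deriv_le hg hd
      (fun z hz ↦ (abs_le.1 (hK z hz)).2) x hx y hy hxy

lemma mul_sub_le_sub_of_le_deriv (hd : ∀ x ∈ Icc a b, DifferentiableAt ℝ g x)
    (hK : ∀ x ∈ Icc a b, K ≤ deriv g x) {x y : ℝ} (hx : x ∈ Icc a b) (hy : y ∈ Icc a b)
    (hxy : x ≤ y) : K * (y - x) ≤ g y - g x :=
  (convex_Icc a b).mul_sub_le_image_sub_of_le_deriv
    (fun z hz ↦ (hd z hz).continuousAt.continuousWithinAt)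
    (fun z hz ↦ (hd z (interior_subset hz)).differentiableWithinAt)
    (fun z hz ↦ hK z (interior_subset hz)) x hx y hy hxy

lemma le_of_forall_eq_imp_deriv_pos (hg : ContinuousOn g (Icc a b))
    (hd : ∀ x ∈ Ico a b, HasDerivAt g (g' x) x) (ha : m ≤ g a)
    (hm : ∀ x ∈ Ico a b, g x = m → 0 < g' x) {x : ℝ} (hx : x ∈ Icc a b) : m ≤ g x := by
  refine neg_le_neg_iff.1 (image_le_of_deriv_right_lt_deriv_boundary hg.neg
    (fun y hy ↦ (hd y hy).neg.hasDerivWithinAt) (B := fun _ ↦ -m) (neg_le_neg ha)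
    (fun y ↦ hasDerivAt_const y (-m)) (fun y hy hym ↦ ?_) hx)
  exact neg_lt_zero.2 (hm y hy (neg_injective hym))

lemma le_of_forall_eq_imp_deriv_pos' (hg : ContinuousOn g (Icc a b))
    (hd : ∀ x ∈ Ioc a b, HasDerivAt g (g' x) x) (hb : g b ≤ m)
    (hm : ∀ x ∈ Ioc a b, g x = m → 0 < g' x) {x : ℝ} (hx : x ∈ Icc a b) : g x ≤ m := by
  have hmem : ∀ {y}, y ∈ Ico (-b) (-a) → -y ∈ Ioc a b := fun hy ↦ ⟨lt_neg.1 hy.2, neg_le.1 hy.1⟩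
  refine neg_le_neg_iff.1 (?_ : -m ≤ -g x)
  rw [← neg_neg x]
  refine le_of_forall_eq_imp_deriv_pos (g := fun y ↦ -g (-y)) (g' := fun y ↦ g' (-y))
    (a := -b) (b := -a) (x := -x) ?_ (fun y hy ↦ ?_) (by simpa using hb) (fun y hy hym ↦ ?_)
    ⟨neg_le_neg hx.2, neg_le_neg hx.1⟩
  · exact (hg.comp continuous_neg.continuousOn fun y hy ↦ ⟨le_neg.1 hy.2, neg_le.1 hy.1⟩).neg
  · exact ((hd _ (hmem hy)).comp y (hasDerivAt_neg y)).neg.congr_deriv (by ring)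
  · exact hm _ (hmem hy) (neg_injective hym)

/-- A bound for the first two derivatives of `tan ∘ g` when those of `g` are bounded by `K` and
`|g| ≤ 1 / 2`. -/
def tanBound (K : ℝ) : ℝ := 2 * K + 4 * K ^ 2

lemma cos_ne_zero_of_abs_le_half {y : ℝ} (hy : |y| ≤ 1 / 2) : Real.cos y ≠ 0 := by
  refine (Real.cos_pos_of_le_one ?_).ne'
  linarith

lemma abs_tan_le_two_mul {y : ℝ} (hy : |y| ≤ 1 / 2) : |Real.tan y| ≤ 2 * |y| := by
  have hcos : 1 / 2 ≤ Real.cos y := by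
    nlinarith [Real.one_sub_sq_div_two_le_cos (x := y), sq_abs y, abs_nonneg y]
  rw [Real.tan_eq_sin_div_cos, abs_div, abs_of_pos (by linarith : 0 < Real.cos y),
    div_le_iff₀ (by linarith)]
  nlinarith [Real.abs_sin_le_abs (x := y), abs_nonneg y]

lemma le_tan_of_nonneg {y : ℝ} (hy₀ : 0 ≤ y) (hy : y ≤ 1 / 2) : y ≤ Real.tan y :=
  Real.le_tan hy₀ (by linarith [Real.pi_gt_three])

lemma sq_tan_le_one {y : ℝ} (hy : |y| ≤ 1 / 2) : Real.tan y ^ 2 ≤ 1 := by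
  rw [sq_le_one_iff_abs_le_one]
  linarith [abs_tan_le_two_mul hy]

lemma hasDerivAt_tan_one_add_sq {y : ℝ} (hy : |y| ≤ 1 / 2) :
    HasDerivAt Real.tan (1 + Real.tan y ^ 2) y := by
  have hcos := cos_ne_zero_of_abs_le_half hy
  refine (Real.hasDerivAt_tan hcos).congr_deriv ?_
  rw [one_div, ← Real.inv_one_add_tan_sq hcos, inv_inv]

lemma deriv_tan_eventuallyEq {y : ℝ} (hy : Real.cos y ≠ 0) :
    deriv Real.tan =ᶠ[𝓝 y] fun z ↦ 1 + Real.tan z ^ 2 := by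
  filter_upwards [Real.continuous_cos.continuousAt.eventually_ne hy] with z hz
  rw [Real.deriv_tan, one_div, ← Real.inv_one_add_tan_sq hz, inv_inv]

variable {x : ℝ}

lemma deriv_tan_comp (hx : |g x| ≤ 1 / 2) (hg : DifferentiableAt ℝ g x) :
    deriv (fun y ↦ Real.tan (g y)) x = (1 + Real.tan (g x) ^ 2) * deriv g x :=
  ((hasDerivAt_tan_one_add_sq hx).comp x hg.hasDerivAt).deriv

lemma iteratedDeriv_two_tan_comp (hx : |g x| ≤ 1 / 2) (hg : ContDiffAt ℝ 2 g x) :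
    iteratedDeriv 2 (fun y ↦ Real.tan (g y)) x =
      (1 + Real.tan (g x) ^ 2) * (2 * Real.tan (g x) * deriv g x ^ 2 + iteratedDeriv 2 g x) := by
  have htan : ContDiffAt ℝ 2 Real.tan (g x) :=
    Real.contDiffAt_tan.2 (cos_ne_zero_of_abs_le_half hx)
  have htan₂ : iteratedDeriv 2 Real.tan (g x) =
      2 * Real.tan (g x) * (1 + Real.tan (g x) ^ 2) := by
    rw [iteratedDeriv_succ, iteratedDeriv_one,
      (deriv_tan_eventuallyEq (cos_ne_zero_of_abs_le_half hx)).deriv_eq]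
    simpa using (((hasDerivAt_tan_one_add_sq hx).pow 2).const_add 1).deriv
  change iteratedDeriv 2 (Real.tan ∘ g) x = _
  rw [iteratedDeriv_comp_two htan hg, htan₂, (hasDerivAt_tan_one_add_sq hx).deriv]
  ring

lemma iteratedDeriv_succ_add_const (n : ℕ) (g : ℝ → ℝ) (k : ℝ) :
    iteratedDeriv (n + 1) (fun y ↦ g y + k) = iteratedDeriv (n + 1) g := by
  rw [iteratedDeriv_succ', iteratedDeriv_succ', deriv_add_const']

lemma contDiffAt_tan_comp {n : WithTop ℕ∞} (hx : |g x| ≤ 1 / 2) (hg : ContDiffAt ℝ n g x) :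
    ContDiffAt ℝ n (fun y ↦ Real.tan (g y)) x :=
  (Real.contDiffAt_tan.2 (cos_ne_zero_of_abs_le_half hx)).comp x hg

lemma le_deriv_tan_comp {σ : ℝ} (hx : |g x| ≤ 1 / 2) (hg : DifferentiableAt ℝ g x) (hσ : 0 ≤ σ)
    (hg' : σ ≤ deriv g x) : σ ≤ deriv (fun y ↦ Real.tan (g y)) x := by
  rw [deriv_tan_comp hx hg]
  nlinarith [sq_nonneg (Real.tan (g x))]

lemma abs_deriv_tan_comp_le (hx : |g x| ≤ 1 / 2) (hg : DifferentiableAt ℝ g x)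
    (hg' : |deriv g x| ≤ K) : |deriv (fun y ↦ Real.tan (g y)) x| ≤ tanBound K := by
  have ht := sq_tan_le_one hx
  rw [deriv_tan_comp hx hg, abs_mul, abs_of_pos (by positivity), tanBound]
  nlinarith [abs_nonneg (deriv g x)]

lemma abs_iteratedDeriv_two_tan_comp_le (hx : |g x| ≤ 1 / 2) (hg : ContDiffAt ℝ 2 g x)
    (hg₁ : |deriv g x| ≤ K) (hg₂ : |iteratedDeriv 2 g x| ≤ K) :
    |iteratedDeriv 2 (fun y ↦ Real.tan (g y)) x| ≤ tanBound K := by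
  have ht := sq_tan_le_one hx
  have ht' : |Real.tan (g x)| ≤ 1 := (sq_le_one_iff_abs_le_one _).1 ht
  have hsq : deriv g x ^ 2 ≤ K ^ 2 := sq_le_sq.2 (hg₁.trans (le_abs_self K))
  have hinner : |2 * Real.tan (g x) * deriv g x ^ 2 + iteratedDeriv 2 g x| ≤ 2 * K ^ 2 + K :=
    calc _ ≤ 2 * |Real.tan (g x)| * deriv g x ^ 2 + |iteratedDeriv 2 g x| := by
          refine (abs_add_le _ _).trans_eq ?_
          rw [abs_mul, abs_mul, abs_two, abs_of_nonneg (sq_nonneg (deriv g x))]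
      _ ≤ 2 * 1 * K ^ 2 + K := by gcongr
      _ = 2 * K ^ 2 + K := by ring
  rw [iteratedDeriv_two_tan_comp hx hg, abs_mul, abs_of_pos (by positivity), tanBound]
  nlinarith [abs_nonneg (2 * Real.tan (g x) * deriv g x ^ 2 + iteratedDeriv 2 g x)]

lemma iteratedDeriv_two_mul_add {T S W : ℝ → ℝ} (hT : ContDiffAt ℝ 2 T x)
    (hS : ContDiffAt ℝ 2 S x) (hW : ContDiffAt ℝ 2 W x) :
    iteratedDeriv 2 (fun y ↦ T y * S y + W y) x =
      iteratedDeriv 2 T x * S x + 2 * deriv T x * deriv S x + T x * iteratedDeriv 2 S x +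
        iteratedDeriv 2 W x := by
  rw [iteratedDeriv_fun_add (hT.mul hS) hW, iteratedDeriv_fun_mul hT hS]
  simp only [Finset.sum_range_succ, Finset.sum_range_zero, Nat.reduceAdd, Nat.choose_zero_right,
    Nat.choose_one_right, Nat.choose_self, Nat.cast_one, Nat.cast_ofNat, iteratedDeriv_zero,
    iteratedDeriv_one, Nat.sub_zero, Nat.reduceSub, Nat.sub_self]
  ring

lemma strictConvexOn_mul_add {D : Set ℝ} (hD : Convex ℝ D) {T S W : ℝ → ℝ} {ε σ M e : ℝ}
    (hT : ∀ x ∈ D, ContDiffAt ℝ 2 T x) (hS : ∀ x ∈ D, ContDiffAt ℝ 2 S x)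
    (hW : ∀ x ∈ D, ContDiffAt ℝ 2 W x) (hσ : 0 ≤ σ)
    (hT₀ : ∀ x ∈ D, |T x| ≤ ε) (hT₁ : ∀ x ∈ D, σ ≤ deriv T x)
    (hT₂ : ∀ x ∈ D, |iteratedDeriv 2 T x| ≤ M)
    (hS₀ : ∀ x ∈ D, |S x| ≤ ε) (hS₁ : ∀ x ∈ D, σ ≤ deriv S x)
    (hS₂ : ∀ x ∈ D, |iteratedDeriv 2 S x| ≤ M)
    (hW₂ : ∀ x ∈ D, |iteratedDeriv 2 W x| ≤ e) (hε : 2 * M * ε + e < 2 * σ ^ 2) :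
    StrictConvexOn ℝ D fun x ↦ T x * S x + W x := by
  refine strictConvexOn_of_deriv2_pos' hD (fun x hx ↦ (((hT x hx).mul (hS x hx)).add
    (hW x hx)).continuousAt.continuousWithinAt) fun x hx ↦ ?_
  rw [← iteratedDeriv_eq_iterate, iteratedDeriv_two_mul_add (hT x hx) (hS x hx) (hW x hx)]
  have hTS : -(M * ε) ≤ iteratedDeriv 2 T x * S x := neg_le_of_abs_le <| by
    rw [abs_mul]
    exact mul_le_mul (hT₂ x hx) (hS₀ x hx) (abs_nonneg _) ((abs_nonneg _).trans (hT₂ x hx))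
  have hST : -(ε * M) ≤ T x * iteratedDeriv 2 S x := neg_le_of_abs_le <| by
    rw [abs_mul]
    exact mul_le_mul (hT₀ x hx) (hS₂ x hx) (abs_nonneg _) ((abs_nonneg _).trans (hT₀ x hx))
  have hσσ : σ * σ ≤ deriv T x * deriv S x :=
    mul_le_mul (hT₁ x hx) (hS₁ x hx) hσ (hσ.trans (hT₁ x hx))
  linarith [neg_le_of_abs_le (hW₂ x hx)]

end Calculus

section SteepZero

/-- `g` is `C²` on `[A, B]` with derivatives bounded by `K`, vanishes at `x₀`, has slope at least
`σ` at distance at most `ρ` from `x₀`, and is at least `m` in modulus, with the sign that an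
increasing function has, on the rest of `[A, B]`. This is what type `I₊` provides for a lift
vanishing at `x₀`. Derivatives are only controlled in the open interval, since `deriv` has no
meaning for a function on `[A, B]` at the endpoints. -/
structure SteepZero (K σ m ρ A B x₀ : ℝ) (g : ℝ → ℝ) : Prop where
  slope_pos : 0 < σ
  level_pos : 0 < m
  radius_pos : 0 < ρ
  lt_left : A < x₀ - ρ
  lt_right : x₀ + ρ < B
  contDiffOn : ContDiffOn ℝ 2 g (Icc A B)
  abs_deriv_le : ∀ x ∈ Ioo A B, |deriv g x| ≤ K
  abs_iteratedDeriv_two_le : ∀ x ∈ Ioo A B, |iteratedDeriv 2 g x| ≤ K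
  le_deriv : ∀ x ∈ Icc (x₀ - ρ) (x₀ + ρ), σ ≤ deriv g x
  map_zero : g x₀ = 0
  far_right : ∀ x ∈ Icc (x₀ + ρ) B, m ≤ g x
  far_left : ∀ x ∈ Icc A (x₀ - ρ), g x ≤ -m

namespace SteepZero

variable {K σ m ρ A B x₀ x : ℝ} {g : ℝ → ℝ}

lemma contDiffAt (h : SteepZero K σ m ρ A B x₀ g) (hx : x ∈ Ioo A B) : ContDiffAt ℝ 2 g x :=
  h.contDiffOn.contDiffAt (Icc_mem_nhds hx.1 hx.2)

lemma differentiableAt (h : SteepZero K σ m ρ A B x₀ g) (hx : x ∈ Ioo A B) :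
    DifferentiableAt ℝ g x :=
  (h.contDiffAt hx).differentiableAt two_ne_zero

lemma near_subset (h : SteepZero K σ m ρ A B x₀ g) : Icc (x₀ - ρ) (x₀ + ρ) ⊆ Ioo A B :=
  fun _ hx ↦ ⟨h.lt_left.trans_le hx.1, hx.2.trans_lt h.lt_right⟩

lemma mem_near (h : SteepZero K σ m ρ A B x₀ g) : x₀ ∈ Icc (x₀ - ρ) (x₀ + ρ) :=
  ⟨by linarith [h.radius_pos], by linarith [h.radius_pos]⟩

lemma abs_le (h : SteepZero K σ m ρ A B x₀ g) (hx : x ∈ Icc A B) : |g x| ≤ K * |x - x₀| := by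
  simpa [h.map_zero] using abs_sub_le_mul_abs_sub h.contDiffOn.continuousOn
    (fun y hy ↦ (h.differentiableAt hy).differentiableWithinAt) h.abs_deriv_le
    (Ioo_subset_Icc_self (h.near_subset h.mem_near)) hx

lemma bound_pos (h : SteepZero K σ m ρ A B x₀ g) : 0 < K :=
  h.slope_pos.trans_le <| (h.le_deriv _ h.mem_near).trans <| (le_abs_self _).trans <|
    h.abs_deriv_le _ (h.near_subset h.mem_near)

lemma abs_le_mul_length (h : SteepZero K σ m ρ A B x₀ g) (hx : x ∈ Icc A B) :
    |g x| ≤ K * (B - A) := by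
  refine (h.abs_le hx).trans (mul_le_mul_of_nonneg_left ?_ h.bound_pos.le)
  exact abs_sub_le_of_le_of_le hx.1 hx.2 (h.near_subset h.mem_near).1.le
    (h.near_subset h.mem_near).2.le

lemma mul_sub_le (h : SteepZero K σ m ρ A B x₀ g) (hx : x ∈ Icc x₀ (x₀ + ρ)) :
    σ * (x - x₀) ≤ g x := by
  simpa only [h.map_zero, sub_zero] using mul_sub_le_sub_of_le_deriv
    (fun z hz ↦ h.differentiableAt (h.near_subset hz)) h.le_deriv h.mem_near
    ⟨h.mem_near.1.trans hx.1, hx.2⟩ hx.1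

lemma le_mul_sub (h : SteepZero K σ m ρ A B x₀ g) (hx : x ∈ Icc (x₀ - ρ) x₀) :
    g x ≤ σ * (x - x₀) := by
  have := mul_sub_le_sub_of_le_deriv (fun z hz ↦ h.differentiableAt (h.near_subset hz))
    h.le_deriv ⟨hx.1, hx.2.trans h.mem_near.2⟩ h.mem_near hx.2
  rw [h.map_zero] at this
  linarith

lemma pos_of_lt (h : SteepZero K σ m ρ A B x₀ g) (hx : x₀ < x) (hxB : x ≤ B) : 0 < g x := by
  rcases le_total x (x₀ + ρ) with hnear | hfar
  · exact (mul_pos h.slope_pos (sub_pos.2 hx)).trans_le (h.mul_sub_le ⟨hx.le, hnear⟩)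
  · exact h.level_pos.trans_le (h.far_right x ⟨hfar, hxB⟩)

lemma neg_of_lt (h : SteepZero K σ m ρ A B x₀ g) (hx : x < x₀) (hAx : A ≤ x) : g x < 0 := by
  rcases le_total (x₀ - ρ) x with hnear | hfar
  · exact (h.le_mul_sub ⟨hnear, hx.le⟩).trans_lt (mul_neg_of_pos_of_neg h.slope_pos (sub_neg.2 hx))
  · exact (h.far_left x ⟨hAx, hfar⟩).trans_lt (neg_neg_of_pos h.level_pos)

lemma nonneg_of_le (h : SteepZero K σ m ρ A B x₀ g) (hx : x₀ ≤ x) (hxB : x ≤ B) : 0 ≤ g x :=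
  hx.eq_or_lt.elim (fun hx ↦ hx ▸ h.map_zero.ge) fun hx ↦ (h.pos_of_lt hx hxB).le

lemma nonpos_of_le (h : SteepZero K σ m ρ A B x₀ g) (hx : x ≤ x₀) (hAx : A ≤ x) : g x ≤ 0 :=
  hx.eq_or_lt.elim (fun hx ↦ hx ▸ h.map_zero.le) fun hx ↦ (h.neg_of_lt hx hAx).le

lemma mul_abs_sub_le_of_abs_lt (h : SteepZero K σ m ρ A B x₀ g) (hx : x ∈ Icc A B)
    (hm : |g x| < m) : σ * |x - x₀| ≤ |g x| := by
  have hright : x < x₀ + ρ := by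
    by_contra! hfar
    exact absurd ((h.far_right x ⟨hfar, hx.2⟩).trans (le_abs_self _)) hm.not_ge
  have hleft : x₀ - ρ < x := by
    by_contra! hfar
    exact absurd (le_neg_of_le_neg (h.far_left x ⟨hx.1, hfar⟩) |>.trans (neg_le_abs _)) hm.not_ge
  rcases le_total x₀ x with hle | hle
  · rw [abs_of_nonneg (sub_nonneg.2 hle)]
    exact (h.mul_sub_le ⟨hle, hright.le⟩).trans (le_abs_self _)
  · rw [abs_of_nonpos (sub_nonpos.2 hle), mul_neg]
    exact (neg_le_neg (h.le_mul_sub ⟨hleft.le, hle⟩)).trans (neg_le_abs _)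

lemma tan (h : SteepZero K σ m ρ A B x₀ g) (hg : ∀ x ∈ Icc A B, |g x| ≤ 1 / 2) :
    SteepZero (tanBound K) σ m ρ A B x₀ fun x ↦ Real.tan (g x) where
  slope_pos := h.slope_pos
  level_pos := h.level_pos
  radius_pos := h.radius_pos
  lt_left := h.lt_left
  lt_right := h.lt_right
  contDiffOn x hx := (Real.contDiffAt_tan.2
    (cos_ne_zero_of_abs_le_half (hg x hx))).comp_contDiffWithinAt x (h.contDiffOn x hx)
  abs_deriv_le x hx := abs_deriv_tan_comp_le (hg x (Ioo_subset_Icc_self hx))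
    (h.differentiableAt hx) (h.abs_deriv_le x hx)
  abs_iteratedDeriv_two_le x hx := abs_iteratedDeriv_two_tan_comp_le
    (hg x (Ioo_subset_Icc_self hx)) (h.contDiffAt hx) (h.abs_deriv_le x hx)
    (h.abs_iteratedDeriv_two_le x hx)
  le_deriv x hx := le_deriv_tan_comp (hg x (Ioo_subset_Icc_self (h.near_subset hx)))
    (h.differentiableAt (h.near_subset hx)) h.slope_pos.le (h.le_deriv x hx)
  map_zero := by rw [h.map_zero, Real.tan_zero]
  far_right x hx := by
    have hxAB : x ∈ Icc A B := ⟨by linarith [h.lt_left, hx.1, h.radius_pos], hx.2⟩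
    have hpos : 0 ≤ g x := h.level_pos.le.trans (h.far_right x hx)
    exact (h.far_right x hx).trans (le_tan_of_nonneg hpos ((le_abs_self _).trans (hg x hxAB)))
  far_left x hx := by
    have hxAB : x ∈ Icc A B := ⟨hx.1, by linarith [h.lt_right, hx.2, h.radius_pos]⟩
    have hneg : 0 ≤ -g x := by linarith [h.level_pos, h.far_left x hx]
    have := le_tan_of_nonneg hneg ((neg_le_abs _).trans (hg x hxAB))
    rw [Real.tan_neg] at this
    linarith [h.far_left x hx]

end SteepZero

lemma TypeOne.neg {C c r xb x₀ : ℝ} {f : ℝ → ℝ} (h : TypeOne C c r xb x₀ f) :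
    TypeOne C c r xb x₀ (-f) := by
  have hderiv : deriv (-f) = -deriv f := deriv.neg'
  have hcoe : ∀ x, (((-f) x : ℝ) : AddCircle π) = -(f x : AddCircle π) := fun x ↦
    AddCircle.coe_neg π
  obtain ⟨hsmooth, hbound, hmem, hzero, huniq, hcrit, hsteep, hfar⟩ := h
  refine ⟨hsmooth.neg, fun x hx ↦ ?_, hmem, ?_, fun x hx hx₀ ↦ ?_, fun x hx y hy ↦ ?_,
    fun x hx ↦ ?_, fun x hx hsign ↦ ?_⟩
  · simpa [hderiv, iteratedDeriv_neg] using hbound x hx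
  · rw [hcoe, hzero, neg_zero]
  · exact huniq x hx (by rwa [hcoe, neg_eq_zero] at hx₀)
  · simpa [hderiv] using hcrit x hx y hy
  · simpa [hderiv] using hsteep x hx
  · rw [pDist, hcoe, norm_neg]
    exact hfar x hx (by simpa [hderiv] using hsign)

lemma TypeOneMinus.neg {C c r xb x₀ : ℝ} {f : ℝ → ℝ} (h : TypeOneMinus C c r xb x₀ f) :
    TypeOnePlus C c r xb x₀ (-f) := by
  refine ⟨h.1.neg, ?_⟩
  rw [deriv.neg']
  exact neg_pos.2 h.2

lemma pDist_le_abs_sub {a b : ℝ} (hb : (b : AddCircle π) = 0) : pDist a ≤ |a - b| := by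
  have hab : ((a - b : ℝ) : AddCircle π) = a := by rw [AddCircle.coe_sub, hb, sub_zero]
  rw [pDist, ← hab]
  exact QuotientAddGroup.norm_mk_le_norm

namespace TypeOnePlus

variable {C c r xb x₀ x : ℝ} {f : ℝ → ℝ}

lemma near_subset (h : TypeOnePlus C c r xb x₀ f) (hr : 0 < r) :
    Icc (x₀ - r / 2) (x₀ + r / 2) ⊆ Ioo (xb - r) (xb + r) := by
  have hx₀ := abs_le.1 (Real.dist_eq _ _ ▸ Metric.mem_closedBall.1 h.1.2.2.1)
  exact fun x hx ↦ ⟨by linarith [hx.1], by linarith [hx.2]⟩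

lemma contDiffAt (h : TypeOnePlus C c r xb x₀ f) (hx : x ∈ Ioo (xb - r) (xb + r)) :
    ContDiffAt ℝ 2 f x :=
  h.1.1.contDiffAt (Real.closedBall_eq_Icc ▸ Icc_mem_nhds hx.1 hx.2)

lemma sq_lt_deriv (h : TypeOnePlus C c r xb x₀ f) (hr : 0 < r)
    (hx : x ∈ Icc (x₀ - r / 2) (x₀ + r / 2)) : r ^ 2 < deriv f x := by
  have hsteep : ∀ y ∈ Icc (x₀ - r / 2) (x₀ + r / 2), r ^ 2 < |deriv f y| := by
    simpa only [Real.closedBall_eq_Icc] using h.1.2.2.2.2.2.2.1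
  have hpos : 0 < deriv f x := by
    rcases hasDerivWithinAt_forall_lt_or_forall_gt_of_forall_ne (convex_Icc _ _)
      (fun y hy ↦ ((h.contDiffAt (h.near_subset hr hy)).differentiableAt
        two_ne_zero).hasDerivAt.hasDerivWithinAt)
      (fun y hy ↦ abs_pos.1 ((sq_nonneg r).trans_lt (hsteep y hy))) with hneg | hpos
    · exact absurd (hneg x₀ ⟨by linarith, by linarith⟩) h.2.not_gt
    · exact hpos x hx
  simpa only [abs_of_pos hpos] using hsteep x hx

lemma lt_abs_sub_of_deriv_nonpos (h : TypeOnePlus C c r xb x₀ f)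
    (hx : x ∈ Ioo (xb - r) (xb + r)) (hx' : deriv f x ≤ 0) : c * r ^ 3 < |f x - f x₀| :=
  (h.1.2.2.2.2.2.2.2 x (Real.closedBall_eq_Icc ▸ Ioo_subset_Icc_self hx)
    (mul_nonpos_of_nonpos_of_nonneg hx' h.2.le)).trans_le (pDist_le_abs_sub h.1.2.2.2.1)

lemma deriv_pos_of_abs_sub_eq (h : TypeOnePlus C c r xb x₀ f) (hr : 0 < r)
    (hx : x ∈ Ioo (xb - r) (xb + r)) (hfx : |f x - f x₀| = min (1 / 2) c * r ^ 3) :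
    0 < deriv f x := by
  by_contra! hx'
  have := h.lt_abs_sub_of_deriv_nonpos hx hx'
  rw [hfx] at this
  exact this.not_ge (mul_le_mul_of_nonneg_right (min_le_right _ _) (by positivity))

lemma mul_sub_le_sub (h : TypeOnePlus C c r xb x₀ f) (hr : 0 < r) {y : ℝ}
    (hx : x ∈ Icc (x₀ - r / 2) (x₀ + r / 2)) (hy : y ∈ Icc (x₀ - r / 2) (x₀ + r / 2))
    (hxy : x ≤ y) : r ^ 2 * (y - x) ≤ f y - f x :=
  mul_sub_le_sub_of_le_deriv
    (fun _ hz ↦ (h.contDiffAt (h.near_subset hr hz)).differentiableAt two_ne_zero)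
    (fun _ hz ↦ (h.sq_lt_deriv hr hz).le) hx hy hxy

lemma min_mul_pow_three_le (hr : 0 < r) : min (1 / 2) c * r ^ 3 ≤ r ^ 2 * (r / 2) := by
  nlinarith [min_le_left (1 / 2) c, pow_pos hr 3]

lemma le_sub_of_right (h : TypeOnePlus C c r xb x₀ f) (hr : 0 < r) (hc : 0 < c)
    (hx : x ∈ Icc (x₀ + r / 2) (xb + r)) : min (1 / 2) c * r ^ 3 ≤ f x - f x₀ := by
  have hnear : x₀ + r / 2 ∈ Ioo (xb - r) (xb + r) := h.near_subset hr ⟨by linarith, le_rfl⟩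
  have hI : Icc (x₀ + r / 2) (xb + r) ⊆ Icc (xb - r) (xb + r) := Icc_subset_Icc_left hnear.1.le
  refine le_of_forall_eq_imp_deriv_pos (g := fun y ↦ f y - f x₀) (g' := deriv f)
    ((h.1.1.continuousOn.mono (Real.closedBall_eq_Icc ▸ hI)).sub continuousOn_const)
    (fun y hy ↦ ((h.contDiffAt ⟨hnear.1.trans_le hy.1, hy.2⟩).differentiableAt
      two_ne_zero).hasDerivAt.sub_const _) ?_ (fun y hy hym ↦ ?_) hx
  · have hslope := h.mul_sub_le_sub hr (x := x₀) (y := x₀ + r / 2) ⟨by linarith, by linarith⟩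
      ⟨by linarith, le_rfl⟩ (by linarith)
    linarith [min_mul_pow_three_le (c := c) hr]
  · refine h.deriv_pos_of_abs_sub_eq hr ⟨hnear.1.trans_le hy.1, hy.2⟩ ?_
    rw [hym, abs_of_pos (by positivity)]

lemma sub_le_of_left (h : TypeOnePlus C c r xb x₀ f) (hr : 0 < r) (hc : 0 < c)
    (hx : x ∈ Icc (xb - r) (x₀ - r / 2)) : f x - f x₀ ≤ -(min (1 / 2) c * r ^ 3) := by
  have hnear : x₀ - r / 2 ∈ Ioo (xb - r) (xb + r) := h.near_subset hr ⟨le_rfl, by linarith⟩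
  have hI : Icc (xb - r) (x₀ - r / 2) ⊆ Icc (xb - r) (xb + r) := Icc_subset_Icc_right hnear.2.le
  refine le_of_forall_eq_imp_deriv_pos' (g := fun y ↦ f y - f x₀) (g' := deriv f)
    ((h.1.1.continuousOn.mono (Real.closedBall_eq_Icc ▸ hI)).sub continuousOn_const)
    (fun y hy ↦ ((h.contDiffAt ⟨hy.1, hy.2.trans_lt hnear.2⟩).differentiableAt
      two_ne_zero).hasDerivAt.sub_const _) ?_ (fun y hy hym ↦ ?_) hx
  · have hslope := h.mul_sub_le_sub hr (x := x₀ - r / 2) (y := x₀) ⟨le_rfl, by linarith⟩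
      ⟨by linarith, by linarith⟩ (by linarith)
    linarith [min_mul_pow_three_le (c := c) hr]
  · refine h.deriv_pos_of_abs_sub_eq hr ⟨hy.1, hy.2.trans_lt hnear.2⟩ ?_
    rw [hym, abs_neg, abs_of_pos (by positivity)]

lemma steepZero (h : TypeOnePlus C c r xb x₀ f) (hr : 0 < r) (hc : 0 < c) :
    SteepZero C (r ^ 2) (min (1 / 2) c * r ^ 3) (r / 2) (xb - r) (xb + r) x₀
      fun x ↦ f x - f x₀ where
  slope_pos := by positivity
  level_pos := by positivity
  radius_pos := by positivity
  lt_left := (h.near_subset hr ⟨le_rfl, by linarith⟩).1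
  lt_right := (h.near_subset hr ⟨by linarith, le_rfl⟩).2
  contDiffOn := (Real.closedBall_eq_Icc ▸ h.1.1).sub contDiffOn_const
  abs_deriv_le x hx := by
    rw [deriv_sub_const]
    exact (h.1.2.1 x (Real.closedBall_eq_Icc ▸ Ioo_subset_Icc_self hx)).2.1.le
  abs_iteratedDeriv_two_le x hx := by
    simp only [sub_eq_add_neg, iteratedDeriv_succ_add_const 1 f]
    exact (h.1.2.1 x (Real.closedBall_eq_Icc ▸ Ioo_subset_Icc_self hx)).2.2.le
  le_deriv x hx := by
    rw [deriv_sub_const]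
    exact (h.sq_lt_deriv hr hx).le
  map_zero := sub_self _
  far_right _ := h.le_sub_of_right hr hc
  far_left _ := h.sub_le_of_left hr hc

end TypeOnePlus

end SteepZero

section SmallWeight

/-- A positive `C²` weight on `[A, B]` of size `a²` with first derivative `O(a)` and second
derivative at most `e`; the case of interest is `l⁻²` with `a = l₀⁻¹`. -/
structure SmallWeight (a e A B : ℝ) (W : ℝ → ℝ) : Prop where
  contDiffOn : ContDiffOn ℝ 2 W (Icc A B)
  pos : ∀ x ∈ Icc A B, 0 < W x
  lt_sq : ∀ x ∈ Icc A B, W x < a ^ 2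
  abs_deriv_le : ∀ x ∈ Ioo A B, |deriv W x| ≤ 2 * a
  abs_iteratedDeriv_two_le : ∀ x ∈ Ioo A B, |iteratedDeriv 2 W x| ≤ e

variable {l : ℝ → ℝ} {x : ℝ}

lemma deriv_inv_sq (hl : DifferentiableAt ℝ l x) (h₀ : l x ≠ 0) :
    deriv (fun y ↦ (l y ^ 2)⁻¹) x = -2 * deriv l x / l x ^ 3 := by
  rw [((hl.hasDerivAt.fun_pow 2).fun_inv (pow_ne_zero 2 h₀)).deriv]
  push_cast
  field_simp

lemma iteratedDeriv_two_inv_sq (hl : ContDiffAt ℝ 2 l x) (h₀ : l x ≠ 0) :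
    iteratedDeriv 2 (fun y ↦ (l y ^ 2)⁻¹) x =
      6 * deriv l x ^ 2 / l x ^ 4 - 2 * iteratedDeriv 2 l x / l x ^ 3 := by
  have hzpow : (fun t : ℝ ↦ (t ^ 2)⁻¹) = fun t ↦ t ^ (-2 : ℤ) := by
    ext t
    rw [_root_.zpow_neg]
    rfl
  have hsmooth : ContDiffAt ℝ 2 (fun t : ℝ ↦ (t ^ 2)⁻¹) (l x) :=
    (contDiffAt_id.pow 2).inv (pow_ne_zero 2 h₀)
  change iteratedDeriv 2 ((fun t : ℝ ↦ (t ^ 2)⁻¹) ∘ l) x = _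
  rw [iteratedDeriv_comp_two hsmooth hl, hzpow, iteratedDeriv_eq_iterate, iter_deriv_zpow,
    deriv_zpow]
  simp only [Finset.prod_range_succ, Finset.prod_range_zero, Int.reduceNeg, Int.reduceSub,
    Nat.cast_ofNat, Nat.cast_zero, Nat.cast_one, Int.cast_neg, Int.cast_ofNat, _root_.zpow_neg]
  field_simp
  ring

lemma abs_deriv_inv_sq_le {y y₁ : ℝ} (hy : 0 < y) (h₁ : |y₁| ≤ y ^ 2) :
    |-2 * y₁ / y ^ 3| ≤ 2 * y⁻¹ :=
  calc |-2 * y₁ / y ^ 3| = 2 * |y₁| / y ^ 3 := by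
        rw [abs_div, abs_mul, abs_neg, abs_two, abs_of_pos (pow_pos hy 3)]
    _ ≤ 2 * y ^ 2 / y ^ 3 := by gcongr
    _ = 2 * y⁻¹ := by field_simp

lemma abs_iteratedDeriv_two_inv_sq_le {y y₁ y₂ p : ℝ} (hy : 0 < y) (hyp : y⁻¹ ≤ p)
    (h₁ : |y₁| ≤ p * y ^ 2) (h₂ : |y₂| ≤ p * y ^ 2) :
    |6 * y₁ ^ 2 / y ^ 4 - 2 * y₂ / y ^ 3| ≤ 8 * p ^ 2 :=
  have hp : 0 < p := (inv_pos.2 hy).trans_le hyp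
  calc |6 * y₁ ^ 2 / y ^ 4 - 2 * y₂ / y ^ 3|
      ≤ |6 * y₁ ^ 2 / y ^ 4| + |2 * y₂ / y ^ 3| := abs_sub _ _
    _ = 6 * |y₁| ^ 2 / y ^ 4 + 2 * |y₂| / y ^ 3 := by
        rw [abs_div, abs_div, abs_mul, abs_mul, abs_of_pos (pow_pos hy 3),
          abs_of_pos (pow_pos hy 4), abs_pow, abs_two, abs_of_pos (by norm_num : (0 : ℝ) < 6)]
    _ ≤ 6 * (p * y ^ 2) ^ 2 / y ^ 4 + 2 * (p * y ^ 2) / y ^ 3 := by gcongr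
    _ = 6 * p ^ 2 + 2 * p * y⁻¹ := by field_simp
    _ ≤ 6 * p ^ 2 + 2 * p * p := by gcongr
    _ = 8 * p ^ 2 := by ring

lemma smallWeight_inv_sq {l₀ β A B : ℝ} (hβ : 0 ≤ β) (hβ1 : β ≤ 1) (hl₀ : 1 ≤ l₀)
    (hl : ContDiffOn ℝ 2 l (Icc A B))
    (hbound : ∀ x ∈ Icc A B, l₀ < l x ∧ |deriv l x| < l x ^ (1 + β) ∧
      |iteratedDeriv 2 l x| < l x ^ (1 + β)) :
    SmallWeight l₀⁻¹ (8 * (l₀ ^ (β - 1)) ^ 2) A B fun x ↦ (l x ^ 2)⁻¹ := by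
  have hlpos : ∀ x ∈ Icc A B, 0 < l x := fun x hx ↦ by linarith [(hbound x hx).1]
  have hcont : ∀ x ∈ Ioo A B, ContDiffAt ℝ 2 l x := fun x hx ↦
    hl.contDiffAt (Icc_mem_nhds hx.1 hx.2)
  have hpow : ∀ x ∈ Icc A B, l x ^ (1 + β) = l x ^ (β - 1) * l x ^ 2 := fun x hx ↦ by
    rw [← Real.rpow_add_natCast (hlpos x hx).ne']
    congr 1
    push_cast
    ring
  refine ⟨(hl.pow 2).inv fun x hx ↦ (pow_pos (hlpos x hx) 2).ne', fun x hx ↦ ?_, fun x hx ↦ ?_,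
    fun x hx ↦ ?_, fun x hx ↦ ?_⟩
  · have := hlpos x hx
    positivity
  · rw [← inv_pow]
    have := hlpos x hx
    exact pow_lt_pow_left₀ (inv_strictAnti₀ (by linarith) (hbound x hx).1) (by positivity)
      two_ne_zero
  · have hx' := Ioo_subset_Icc_self hx
    obtain ⟨hlx, hl₁, -⟩ := hbound x hx'
    have hβpow : l x ^ (β - 1) ≤ 1 :=
      Real.rpow_le_one_of_one_le_of_nonpos (by linarith) (by linarith)
    rw [deriv_inv_sq ((hcont x hx).differentiableAt two_ne_zero) (hlpos x hx').ne']
    refine (abs_deriv_inv_sq_le (hlpos x hx') (hl₁.le.trans ?_)).trans (by gcongr)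
    rw [hpow x hx']
    exact mul_le_of_le_one_left (by positivity) hβpow
  · have hx' := Ioo_subset_Icc_self hx
    obtain ⟨hlx, hl₁, hl₂⟩ := hbound x hx'
    rw [hpow x hx'] at hl₁ hl₂
    rw [iteratedDeriv_two_inv_sq (hcont x hx) (hlpos x hx').ne']
    have hinv : (l x)⁻¹ ≤ l x ^ (β - 1) := by
      rw [← Real.rpow_neg_one]
      exact Real.rpow_le_rpow_of_exponent_le (by linarith) (by linarith)
    refine (abs_iteratedDeriv_two_inv_sq_le (hlpos x hx') hinv hl₁.le hl₂.le).trans ?_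
    have := Real.rpow_le_rpow_of_nonpos (by linarith) hlx.le (by linarith : β - 1 ≤ 0)
    have := hlpos x hx'
    gcongr

end SmallWeight

section Scales

/-- Smallness conditions on the length scales `a ≪ δ`, where `a²` bounds the weight and `δ` is the
accuracy to which the minimizers are located; here `a = l₀⁻¹` and `δ = l₀ ^ (-3/4)`. The last three
conditions concern `(K + 1 / σ) * a`, a bound for the minimum that is attained at distance `a`
from a zero. -/
structure Scales (K σ m ρ a δ e : ℝ) : Prop where
  pos : 0 < a
  two_mul_lt : 2 * a < δ
  le_radius : 3 * δ ≤ ρ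
  le_eighth : δ ≤ 1 / 8
  slope : (2 + tanBound K ^ 2) * a < σ ^ 2 * (δ - a)
  convex : 2 * tanBound K * ((3 * tanBound K + 2) * δ) + e < 2 * σ ^ 2
  level_le : (K + 1 / σ) * a ≤ δ
  level_le_mul : (K + 1 / σ) * a ≤ σ * δ
  level_lt : (K + 1 / σ) * a < m

lemma eventually_scales (K : ℝ) {σ m ρ β : ℝ} (hσ : 0 < σ) (hm : 0 < m) (hρ : 0 < ρ)
    (hβ : β < 1) :
    ∀ᶠ l in atTop, Scales K σ m ρ l⁻¹ (l ^ (-(3 : ℝ) / 4)) (8 * (l ^ (β - 1)) ^ 2) := by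
  have hδ : Tendsto (fun l : ℝ ↦ l ^ (-(3 : ℝ) / 4)) atTop (𝓝 0) := by
    simpa only [neg_div] using tendsto_rpow_neg_atTop (show (0 : ℝ) < 3 / 4 by norm_num)
  have hq : Tendsto (fun l : ℝ ↦ l ^ (-(1 / 4 : ℝ))) atTop (𝓝 0) :=
    tendsto_rpow_neg_atTop (by norm_num)
  have he : Tendsto (fun l : ℝ ↦ l ^ (β - 1)) atTop (𝓝 0) := by
    simpa only [neg_sub] using tendsto_rpow_neg_atTop (sub_pos.2 hβ)
  have hconvex : Tendsto (fun l : ℝ ↦ 2 * tanBound K * ((3 * tanBound K + 2) *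
      l ^ (-(3 : ℝ) / 4)) + 8 * (l ^ (β - 1)) ^ 2) atTop (𝓝 0) := by
    simpa using ((hδ.const_mul (3 * tanBound K + 2)).const_mul (2 * tanBound K)).add
      ((he.pow 2).const_mul 8)
  have hslope : Tendsto (fun l : ℝ ↦ (2 + tanBound K ^ 2 + σ ^ 2) * l ^ (-(1 / 4 : ℝ))) atTop
      (𝓝 0) := by
    simpa using hq.const_mul (2 + tanBound K ^ 2 + σ ^ 2)
  have hlevel : Tendsto (fun l : ℝ ↦ (K + 1 / σ) * l ^ (-(1 / 4 : ℝ))) atTop (𝓝 0) := by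
    simpa using hq.const_mul (K + 1 / σ)
  filter_upwards [eventually_gt_atTop 0, hq.eventually_lt_const (show (0 : ℝ) < 1 / 2 by norm_num),
    hδ.eventually_lt_const (show 0 < ρ / 3 by positivity),
    hδ.eventually_lt_const (show (0 : ℝ) < 1 / 8 by norm_num),
    hδ.eventually_lt_const (show 0 < m / σ by positivity),
    hslope.eventually_lt_const (show 0 < σ ^ 2 by positivity),
    hconvex.eventually_lt_const (show 0 < 2 * σ ^ 2 by positivity),
    hlevel.eventually_lt_const one_pos, hlevel.eventually_lt_const hσ]
    with l hl hq hρ heighth hm hslope hconvex hlevel hlevel'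
  have hδl : 0 < l ^ (-(3 : ℝ) / 4) := Real.rpow_pos_of_pos hl _
  have hinv : l⁻¹ = l ^ (-(3 : ℝ) / 4) * l ^ (-(1 / 4 : ℝ)) := by
    rw [← Real.rpow_add hl, ← Real.rpow_neg_one]
    norm_num
  have hσδ : (K + 1 / σ) * l⁻¹ ≤ σ * l ^ (-(3 : ℝ) / 4) := by rw [hinv]; nlinarith
  refine ⟨inv_pos.2 hl, ?_, by linarith, heighth.le, ?_, hconvex, ?_, hσδ, ?_⟩
  · rw [hinv]; nlinarith
  · rw [hinv]; nlinarith
  · rw [hinv]; nlinarith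
  · exact hσδ.trans_lt (by rwa [lt_div_iff₀' hσ] at hm)

end Scales

section Phase

lemma coe_eq_zero_iff_sin_eq_zero {θ : ℝ} : (θ : AddCircle π) = 0 ↔ Real.sin θ = 0 := by
  rw [AddCircle.coe_eq_zero_iff, Real.sin_eq_zero_iff]
  simp only [zsmul_eq_mul]

lemma exists_coe_eq_and_abs_eq_norm (θ : AddCircle π) :
    ∃ μ : ℝ, (μ : AddCircle π) = θ ∧ |μ| = ‖θ‖ := by
  obtain ⟨t, rfl⟩ := QuotientAddGroup.mk_surjective θ
  refine ⟨t - round (π⁻¹ * t) * π, ?_, (AddCircle.norm_eq π).symm⟩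
  rw [AddCircle.coe_sub, sub_eq_self, AddCircle.coe_eq_zero_iff]
  exact ⟨round (π⁻¹ * t), zsmul_eq_mul _ _⟩

/-- The points of `s` at which `‖F‖` is minimal on `s`. -/
def normMinimizers {X E : Type*} [Norm E] (F : X → E) (s : Set X) : Set X :=
  {x ∈ s | IsMinOn (fun y ↦ ‖F y‖) s x}

lemma norm_eq_of_mem_normMinimizers {X E : Type*} [Norm E] {F : X → E} {s : Set X} {x y : X}
    (hx : x ∈ normMinimizers F s) (hy : y ∈ normMinimizers F s) : ‖F x‖ = ‖F y‖ :=
  le_antisymm (hx.2 hy.1) (hy.2 hx.1)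

lemma normMinimizers_eq_of_eq_zero {X E : Type*} [NormedAddGroup E] {F : X → E} {s : Set X} {x : X}
    (hx : x ∈ s) (hx₀ : F x = 0) : normMinimizers F s = {y ∈ s | F y = 0} := by
  ext y
  refine and_congr_right fun _ ↦ ⟨fun hy ↦ ?_, fun hy z _ ↦ ?_⟩
  · have hle : ‖F y‖ ≤ ‖F x‖ := hy hx
    rwa [hx₀, norm_zero, norm_le_zero_iff] at hle
  · change ‖F y‖ ≤ ‖F z‖
    rw [hy, norm_zero]
    exact norm_nonneg _

/-- The type III function `arctan (W⁻¹ * tan U) - π / 2 - V` as a map to `ℝ/πℤ`, where `W` plays the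
role of `l⁻²`, and `U`, `V` those of `f₁`, `-f₂`. -/
def phase (U V W : ℝ → ℝ) (x : ℝ) : AddCircle π :=
  ((Real.arctan ((W x)⁻¹ * Real.tan (U x)) - π / 2 - V x : ℝ) : AddCircle π)

/-- The function whose zeros are the points where `phase U V W` takes the value `μ`; unlike `phase`
it is smooth uniformly in the size of `W`. -/
def gap (U V W : ℝ → ℝ) (μ x : ℝ) : ℝ := Real.tan (U x) * Real.tan (V x + μ) + W x

lemma gap_zero (U V W : ℝ → ℝ) :
    gap U V W 0 = fun x ↦ Real.tan (U x) * Real.tan (V x) + W x := by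
  funext x
  rw [gap, add_zero]

lemma sin_arctan_sub_pi_div_two_sub {t v : ℝ} (hv : Real.cos v ≠ 0) :
    Real.sin (Real.arctan t - π / 2 - v) =
      -(Real.cos (Real.arctan t) * Real.cos v * (t * Real.tan v + 1)) := by
  have htan : Real.sin (Real.arctan t) = t * Real.cos (Real.arctan t) := by
    rw [← Real.tan_mul_cos (Real.cos_arctan_pos t).ne', Real.tan_arctan]
  rw [sub_right_comm, Real.sin_sub_pi_div_two, Real.cos_sub, htan, ← Real.tan_mul_cos hv]
  ring

lemma phase_eq_coe_iff_gap_eq_zero {U V W : ℝ → ℝ} {μ x : ℝ} (hW : W x ≠ 0)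
    (hV : |V x + μ| ≤ 1 / 2) : phase U V W x = μ ↔ gap U V W μ x = 0 := by
  have hcos := cos_ne_zero_of_abs_le_half hV
  rw [phase, ← sub_eq_zero, ← AddCircle.coe_sub, coe_eq_zero_iff_sin_eq_zero, sub_sub,
    sin_arctan_sub_pi_div_two_sub hcos, neg_eq_zero, mul_eq_zero,
    or_iff_right (mul_ne_zero (Real.cos_arctan_pos _).ne' hcos), gap]
  field_simp
  rw [mul_zero]

end Phase

lemma exists_eq_pair_of_forall_not_lt_lt {α : Type*} [LinearOrder α] {X : Set α}
    (hX : X.Nonempty) (h : ∀ x ∈ X, ∀ y ∈ X, ∀ z ∈ X, x < y → ¬ y < z) :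
    ∃ x₁ x₂, x₁ ≤ x₂ ∧ X = {x₁, x₂} := by
  rcases X.subsingleton_or_nontrivial with hsub | hnt
  · obtain ⟨x, rfl⟩ := hX.exists_eq_singleton_or_nontrivial.resolve_right
      (not_nontrivial_iff.2 hsub)
    exact ⟨x, x, le_rfl, (pair_eq_singleton x).symm⟩
  · obtain ⟨x, hx, y, hy, hxy⟩ := hnt.exists_lt
    refine ⟨x, y, hxy.le, Subset.antisymm (fun z hz ↦ ?_) (pair_subset hx hy)⟩
    by_contra! hne
    simp only [mem_insert_iff, mem_singleton_iff, not_or] at hne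
    rcases lt_or_gt_of_ne hne.1 with hzx | hxz
    · exact h z hz x hx y hy hzx hxy
    · rcases lt_or_gt_of_ne hne.2 with hzy | hyz
      · exact h x hx z hz y hy hxz hzy
      · exact h x hx y hy z hz hxy hyz

/-- The data behind a type III function, normalized: `U` and `V` increase through their zeros `0`
and `d`, and the weight `W` is small compared with everything else. -/
structure ResonantPair (K σ m ρ A B d a δ e : ℝ) (U V W : ℝ → ℝ) : Prop where
  scales : Scales K σ m ρ a δ e
  left : SteepZero K σ m ρ A B 0 U
  right : SteepZero K σ m ρ A B d V
  weight : SmallWeight a e A B W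
  length_le : K * (B - A) ≤ 1 / 8
  nonneg : 0 ≤ d
  le_radius : d ≤ ρ

namespace ResonantPair

variable {K σ m ρ A B d a δ e μ x y : ℝ} {U V W : ℝ → ℝ}

lemma δ_pos (h : ResonantPair K σ m ρ A B d a δ e U V W) : 0 < δ := by
  linarith [h.scales.pos, h.scales.two_mul_lt]

lemma zero_mem (h : ResonantPair K σ m ρ A B d a δ e U V W) : (0 : ℝ) ∈ Icc A B :=
  Ioo_subset_Icc_self (h.left.near_subset h.left.mem_near)

lemma abs_left_le (h : ResonantPair K σ m ρ A B d a δ e U V W) (hx : x ∈ Icc A B) :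
    |U x| ≤ 1 / 2 := by
  linarith [h.left.abs_le_mul_length hx, h.length_le]

lemma abs_right_add_le (h : ResonantPair K σ m ρ A B d a δ e U V W) (hx : x ∈ Icc A B)
    (hμ : |μ| ≤ δ) : |V x + μ| ≤ 1 / 2 := by
  linarith [h.right.abs_le_mul_length hx, h.length_le, h.scales.le_eighth, abs_add_le (V x) μ]

lemma left_tan (h : ResonantPair K σ m ρ A B d a δ e U V W) :
    SteepZero (tanBound K) σ m ρ A B 0 fun x ↦ Real.tan (U x) :=
  h.left.tan fun _ ↦ h.abs_left_le

lemma right_tan (h : ResonantPair K σ m ρ A B d a δ e U V W) :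
    SteepZero (tanBound K) σ m ρ A B d fun x ↦ Real.tan (V x) :=
  h.right.tan fun x hx ↦ by
    simpa only [add_zero] using h.abs_right_add_le hx (abs_zero.trans_le h.δ_pos.le)

lemma continuousOn_gap (h : ResonantPair K σ m ρ A B d a δ e U V W) (hμ : |μ| ≤ δ) :
    ContinuousOn (gap U V W μ) (Icc A B) := by
  refine (h.left_tan.contDiffOn.continuousOn.mul fun x hx ↦ ?_).add
    h.weight.contDiffOn.continuousOn
  exact (Real.continuousAt_tan.2 (cos_ne_zero_of_abs_le_half
    (h.abs_right_add_le hx hμ))).comp_continuousWithinAt (f := fun y ↦ V y + μ)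
    ((h.right.contDiffOn.continuousOn x hx).add continuousWithinAt_const)

lemma continuousOn_gap_param (h : ResonantPair K σ m ρ A B d a δ e U V W) (hx : x ∈ Icc A B) :
    ContinuousOn (fun μ ↦ gap U V W μ x) (Icc (-δ) δ) := by
  refine (continuousOn_const.mul fun μ hμ ↦ ?_).add continuousOn_const
  exact ((Real.continuousAt_tan.2 (cos_ne_zero_of_abs_le_half
    (h.abs_right_add_le hx (abs_le.2 hμ)))).comp
    (continuous_const.add continuous_id).continuousAt).continuousWithinAt

lemma continuousOn_phase (h : ResonantPair K σ m ρ A B d a δ e U V W) :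
    ContinuousOn (phase U V W) (Icc A B) := by
  refine (AddCircle.continuous_mk' π).comp_continuousOn ((Real.continuous_arctan.comp_continuousOn
    ((h.weight.contDiffOn.continuousOn.inv₀ fun x hx ↦ (h.weight.pos x hx).ne').mul
      h.left_tan.contDiffOn.continuousOn)).sub continuousOn_const |>.sub
      h.right.contDiffOn.continuousOn)

lemma phase_eq_coe_iff (h : ResonantPair K σ m ρ A B d a δ e U V W) (hx : x ∈ Icc A B)
    (hμ : |μ| ≤ δ) : phase U V W x = μ ↔ gap U V W μ x = 0 :=
  phase_eq_coe_iff_gap_eq_zero (h.weight.pos x hx).ne' (h.abs_right_add_le hx hμ)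

lemma phase_eq_zero_iff (h : ResonantPair K σ m ρ A B d a δ e U V W) (hx : x ∈ Icc A B) :
    phase U V W x = 0 ↔ gap U V W 0 x = 0 := by
  simpa only [AddCircle.coe_zero] using h.phase_eq_coe_iff hx (abs_zero.trans_le h.δ_pos.le)

lemma gap_zero_pos_of_notMem_Ioo (h : ResonantPair K σ m ρ A B d a δ e U V W)
    (hx : x ∈ Icc A B) (hxd : x ∉ Ioo 0 d) : 0 < gap U V W 0 x := by
  rw [gap_zero]
  refine add_pos_of_nonneg_of_pos ?_ (h.weight.pos x hx)
  rcases le_or_gt x 0 with hx₀ | hx₀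
  · exact mul_nonneg_of_nonpos_of_nonpos (h.left_tan.nonpos_of_le hx₀ hx.1)
      (h.right_tan.nonpos_of_le (hx₀.trans h.nonneg) hx.1)
  · have hdx : d ≤ x := not_lt.1 fun hlt ↦ hxd ⟨hx₀, hlt⟩
    exact mul_nonneg (h.left_tan.nonneg_of_le hx₀.le hx.2) (h.right_tan.nonneg_of_le hdx hx.2)

lemma mem_Ioo_of_phase_eq_zero (h : ResonantPair K σ m ρ A B d a δ e U V W) (hx : x ∈ Icc A B)
    (hx₀ : phase U V W x = 0) : x ∈ Ioo 0 d := by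
  by_contra hxd
  exact (h.gap_zero_pos_of_notMem_Ioo hx hxd).ne' ((h.phase_eq_zero_iff hx).1 hx₀)

lemma mul_sub_le_left_tan (h : ResonantPair K σ m ρ A B d a δ e U V W) (hx : x ∈ Icc 0 ρ) :
    σ * x ≤ Real.tan (U x) := by
  simpa only [sub_zero] using h.left_tan.mul_sub_le (x := x) (by rwa [zero_add])

lemma right_tan_le_mul_sub (h : ResonantPair K σ m ρ A B d a δ e U V W) (hx : x ∈ Icc 0 d) :
    Real.tan (V x) ≤ σ * (x - d) :=
  h.right_tan.le_mul_sub ⟨by linarith [hx.1, h.le_radius], hx.2⟩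

lemma Icc_zero_subset (h : ResonantPair K σ m ρ A B d a δ e U V W) : Icc 0 d ⊆ Ioo A B :=
  fun _ hx ↦ ⟨(h.left.near_subset h.left.mem_near).1.trans_le hx.1,
    hx.2.trans_lt (h.right.near_subset h.right.mem_near).2⟩

lemma deriv_gap_zero (h : ResonantPair K σ m ρ A B d a δ e U V W) (hx : x ∈ Ioo A B) :
    deriv (gap U V W 0) x =
      deriv (fun y ↦ Real.tan (U y)) x * Real.tan (V x) +
        Real.tan (U x) * deriv (fun y ↦ Real.tan (V y)) x + deriv W x := by
  have hW : DifferentiableAt ℝ W x :=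
    (h.weight.contDiffOn.contDiffAt (Icc_mem_nhds hx.1 hx.2)).differentiableAt two_ne_zero
  rw [gap_zero]
  exact (((h.left_tan.differentiableAt hx).hasDerivAt.mul
    (h.right_tan.differentiableAt hx).hasDerivAt).add hW.hasDerivAt).deriv

lemma gap_zero_neg_of_mem_Icc (h : ResonantPair K σ m ρ A B d a δ e U V W) (hδd : δ ≤ d)
    (hx : x ∈ Icc a (d - a)) : gap U V W 0 x < 0 := by
  have ha := h.scales.pos
  have hσ := h.left.slope_pos
  have hxd : x ∈ Icc 0 d := ⟨by linarith [hx.1], by linarith [hx.2]⟩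
  have hT := h.mul_sub_le_left_tan ⟨hxd.1, hxd.2.trans h.le_radius⟩
  have hS := h.right_tan_le_mul_sub hxd
  have hW := h.weight.lt_sq x (Ioo_subset_Icc_self (h.Icc_zero_subset hxd))
  have hends : 0 ≤ (x - a) * (d - a - x) := mul_nonneg (sub_nonneg.2 hx.1) (sub_nonneg.2 hx.2)
  have hslope : 2 * a < σ ^ 2 * (δ - a) :=
    (mul_le_mul_of_nonneg_right (by linarith [sq_nonneg (tanBound K)]) ha.le).trans_lt
      h.scales.slope
  have hprod : a ^ 2 < Real.tan (U x) * -Real.tan (V x) :=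
    calc a ^ 2 < a * (2 * a) := by nlinarith
      _ ≤ a * (σ ^ 2 * (δ - a)) := by gcongr
      _ ≤ σ ^ 2 * (a * (d - a)) := by nlinarith [mul_pos (pow_pos hσ 2) ha]
      _ ≤ σ ^ 2 * (x * (d - x)) := mul_le_mul_of_nonneg_left (by linarith) (sq_nonneg σ)
      _ = (σ * x) * (σ * (d - x)) := by ring
      _ ≤ Real.tan (U x) * -Real.tan (V x) :=
        mul_le_mul hT (by linarith) (mul_nonneg hσ.le (sub_nonneg.2 hxd.2))
          ((mul_nonneg hσ.le hxd.1).trans hT)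
  rw [gap_zero]
  linarith

lemma continuousOn_gap_zero (h : ResonantPair K σ m ρ A B d a δ e U V W) :
    ContinuousOn (gap U V W 0) (Icc 0 d) :=
  (h.continuousOn_gap (abs_zero.trans_le h.δ_pos.le)).mono
    (h.Icc_zero_subset.trans Ioo_subset_Icc_self)

lemma strictAntiOn_gap_zero (h : ResonantPair K σ m ρ A B d a δ e U V W) (hδd : δ ≤ d) :
    StrictAntiOn (gap U V W 0) (Icc 0 a) := by
  have ha := h.scales.two_mul_lt
  have hσ := h.left.slope_pos
  have had : Icc 0 a ⊆ Icc 0 d := Icc_subset_Icc_right (by linarith [h.scales.pos])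
  refine strictAntiOn_of_deriv_neg (convex_Icc 0 a) (h.continuousOn_gap_zero.mono had)
    fun x hx ↦ ?_
  replace hx := interior_subset hx
  have hxI := h.Icc_zero_subset (had hx)
  have hfirst : σ * (σ * (δ - a)) ≤
      deriv (fun y ↦ Real.tan (U y)) x * -Real.tan (V x) := by
    have hT' := h.left_tan.le_deriv x
      ⟨by linarith [hx.1, h.left.radius_pos], by linarith [(had hx).2, h.le_radius]⟩
    have hS : σ * (δ - a) ≤ -Real.tan (V x) := by
      nlinarith [h.right_tan_le_mul_sub (had hx), hx.2]
    exact mul_le_mul hT' hS (mul_nonneg hσ.le (by linarith [h.scales.pos])) (hσ.le.trans hT')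
  have hsecond : Real.tan (U x) * deriv (fun y ↦ Real.tan (V y)) x ≤
      tanBound K * a * tanBound K := by
    have hT : |Real.tan (U x)| ≤ tanBound K * a := by
      refine (h.left_tan.abs_le (Ioo_subset_Icc_self hxI)).trans
        (mul_le_mul_of_nonneg_left ?_ h.left_tan.bound_pos.le)
      rw [sub_zero, abs_of_nonneg hx.1]
      exact hx.2
    exact (le_abs_self _).trans <| (abs_mul _ _).trans_le <| mul_le_mul hT
      (h.right_tan.abs_deriv_le x hxI) (abs_nonneg _) ((abs_nonneg _).trans hT)
  rw [h.deriv_gap_zero hxI]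
  linarith [h.scales.slope, (abs_le.1 (h.weight.abs_deriv_le x hxI)).2]

lemma strictMonoOn_gap_zero (h : ResonantPair K σ m ρ A B d a δ e U V W) (hδd : δ ≤ d) :
    StrictMonoOn (gap U V W 0) (Icc (d - a) d) := by
  have ha := h.scales.two_mul_lt
  have hσ := h.left.slope_pos
  have had : Icc (d - a) d ⊆ Icc 0 d := Icc_subset_Icc_left (by linarith [h.scales.pos])
  refine strictMonoOn_of_deriv_pos (convex_Icc (d - a) d) (h.continuousOn_gap_zero.mono had)
    fun x hx ↦ ?_
  replace hx := interior_subset hx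
  have hxI := h.Icc_zero_subset (had hx)
  have hfirst : -(tanBound K * (tanBound K * a)) ≤
      deriv (fun y ↦ Real.tan (U y)) x * Real.tan (V x) := by
    have hS : |Real.tan (V x)| ≤ tanBound K * a := by
      refine (h.right_tan.abs_le (Ioo_subset_Icc_self hxI)).trans
        (mul_le_mul_of_nonneg_left ?_ h.right_tan.bound_pos.le)
      rw [abs_sub_comm, abs_of_nonneg (sub_nonneg.2 hx.2)]
      linarith [hx.1]
    exact neg_le_of_abs_le <| (abs_mul _ _).trans_le <| mul_le_mul
      (h.left_tan.abs_deriv_le x hxI) hS (abs_nonneg _) h.left_tan.bound_pos.le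
  have hsecond : σ * (δ - a) * σ ≤ Real.tan (U x) * deriv (fun y ↦ Real.tan (V y)) x := by
    have hS' := h.right_tan.le_deriv x
      ⟨by linarith [(had hx).1, h.le_radius], by linarith [hx.2, h.left.radius_pos]⟩
    have hT : σ * (δ - a) ≤ Real.tan (U x) := by
      nlinarith [h.mul_sub_le_left_tan ⟨(had hx).1, hx.2.trans h.le_radius⟩, hx.1]
    exact mul_le_mul hT hS' hσ.le ((mul_nonneg hσ.le (by linarith [h.scales.pos])).trans hT)
  rw [h.deriv_gap_zero hxI]
  linarith [h.scales.slope, (abs_le.1 (h.weight.abs_deriv_le x hxI)).1]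

lemma exists_gap_zero_eq_zero_iff (h : ResonantPair K σ m ρ A B d a δ e U V W) (hδd : δ ≤ d) :
    ∃ x₁ ∈ Ioo 0 a, ∃ x₂ ∈ Ioo (d - a) d, ∀ x ∈ Icc A B,
      gap U V W 0 x = 0 ↔ x = x₁ ∨ x = x₂ := by
  have ha := h.scales.pos
  have ha₂ := h.scales.two_mul_lt
  have hcont := h.continuousOn_gap_zero
  have hanti := h.strictAntiOn_gap_zero hδd
  have hmono := h.strictMonoOn_gap_zero hδd
  have hneg : ∀ x ∈ Icc a (d - a), gap U V W 0 x < 0 := fun _ ↦ h.gap_zero_neg_of_mem_Icc hδd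
  have hpos : ∀ x ∈ Icc A B, x ∉ Ioo 0 d → 0 < gap U V W 0 x :=
    fun _ ↦ h.gap_zero_pos_of_notMem_Ioo
  have hd := Ioo_subset_Icc_self (h.Icc_zero_subset ⟨h.nonneg, le_rfl⟩)
  obtain ⟨x₁, hx₁, hgap₁⟩ := intermediate_value_Ioo' ha.le
    (hcont.mono (Icc_subset_Icc_right (by linarith)))
    ⟨hneg a ⟨le_rfl, by linarith⟩, hpos 0 h.zero_mem left_notMem_Ioo⟩
  obtain ⟨x₂, hx₂, hgap₂⟩ := intermediate_value_Ioo (by linarith : d - a ≤ d)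
    (hcont.mono (Icc_subset_Icc_left (by linarith)))
    ⟨hneg (d - a) ⟨by linarith, le_rfl⟩, hpos d hd right_notMem_Ioo⟩
  refine ⟨x₁, hx₁, x₂, hx₂, fun x hx ↦ ⟨fun hgap ↦ ?_, ?_⟩⟩
  · have hxd : x ∈ Ioo 0 d := by
      by_contra hxd
      exact (hpos x hx hxd).ne' hgap
    rcases le_or_gt x a with hxa | hxa
    · exact .inl <| hanti.injOn ⟨hxd.1.le, hxa⟩ (Ioo_subset_Icc_self hx₁) (hgap.trans hgap₁.symm)
    rcases le_or_gt (d - a) x with hxda | hxda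
    · exact .inr <| hmono.injOn ⟨hxda, hxd.2.le⟩ (Ioo_subset_Icc_self hx₂) (hgap.trans hgap₂.symm)
    · exact absurd hgap (hneg x ⟨hxa.le, hxda.le⟩).ne
  · rintro (rfl | rfl) <;> assumption

lemma norm_phase_lt_of_gap_neg (h : ResonantPair K σ m ρ A B d a δ e U V W) (hx : x ∈ Icc A B)
    (hμ : |μ| ≤ δ) (h₀ : 0 < gap U V W 0 x) (hneg : gap U V W μ x < 0) :
    ‖phase U V W x‖ < |μ| := by
  have hsub : uIcc 0 μ ⊆ Icc (-δ) δ := fun s hs ↦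
    abs_le.1 (by simpa using (abs_sub_left_of_mem_uIcc hs).trans (by simpa using hμ))
  obtain ⟨s, hs, hgap⟩ := intermediate_value_uIcc ((h.continuousOn_gap_param hx).mono hsub)
    (mem_uIcc.2 (.inr ⟨hneg.le, h₀.le⟩))
  have hsμ : |s| < |μ| := by
    refine lt_of_le_of_ne (by simpa using abs_sub_left_of_mem_uIcc hs) fun habs ↦ ?_
    have hsμ : s = μ := by
      rcases abs_eq_abs.1 habs with hsμ | hsμ
      · exact hsμ
      · rcases mem_uIcc.1 hs with hs | hs <;> linarith
    exact hneg.ne (hsμ ▸ hgap)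
  rw [(h.phase_eq_coe_iff hx (abs_le.2 (hsub hs))).2 hgap]
  exact QuotientAddGroup.norm_mk_le_norm.trans_lt hsμ

lemma add_mem (h : ResonantPair K σ m ρ A B d a δ e U V W) : d + a ∈ Icc A B :=
  Ioo_subset_Icc_self <| h.right.near_subset
    ⟨by linarith [h.right.radius_pos, h.scales.pos],
      by linarith [h.scales.pos, h.scales.two_mul_lt, h.scales.le_radius]⟩

lemma norm_phase_add_lt (h : ResonantPair K σ m ρ A B d a δ e U V W) (hd : d < δ) :
    ‖phase U V W (d + a)‖ < (K + 1 / σ) * a := by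
  have ha := h.scales.pos
  have hσ := h.left.slope_pos
  have hK := h.left.bound_pos
  have hκ : 0 < (K + 1 / σ) * a := by positivity
  have hκδ : |-((K + 1 / σ) * a)| ≤ δ := by rw [abs_neg, abs_of_pos hκ]; exact h.scales.level_le
  have hx := h.add_mem
  have h₀ : 0 < gap U V W 0 (d + a) := h.gap_zero_pos_of_notMem_Ioo hx fun hd ↦ by linarith [hd.2]
  refine (h.norm_phase_lt_of_gap_neg hx hκδ h₀ ?_).trans_eq (by rw [abs_neg, abs_of_pos hκ])
  have hT : σ * a ≤ Real.tan (U (d + a)) :=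
    (mul_le_mul_of_nonneg_left (by linarith [h.nonneg]) hσ.le).trans <| h.mul_sub_le_left_tan
      ⟨by linarith [h.nonneg], by linarith [h.scales.two_mul_lt, h.scales.le_radius]⟩
  have hS : a / σ ≤ Real.tan (-(V (d + a) + -((K + 1 / σ) * a))) := by
    have hV : V (d + a) ≤ K * a := by
      simpa [abs_of_pos ha] using (le_abs_self _).trans (h.right.abs_le hx)
    have hle : a / σ ≤ -(V (d + a) + -((K + 1 / σ) * a)) := by
      linarith [show (K + 1 / σ) * a = K * a + a / σ by ring]
    exact hle.trans <| le_tan_of_nonneg ((by positivity : 0 ≤ a / σ).trans hle) <|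
      (neg_le_abs _).trans (h.abs_right_add_le hx hκδ)
  rw [Real.tan_neg] at hS
  have hprod : a ^ 2 ≤ Real.tan (U (d + a)) * -Real.tan (V (d + a) + -((K + 1 / σ) * a)) :=
    calc a ^ 2 = (σ * a) * (a / σ) := by field_simp
      _ ≤ _ := mul_le_mul hT hS (by positivity) ((by positivity : 0 ≤ σ * a).trans hT)
  rw [gap]
  linarith [h.weight.lt_sq _ hx]

lemma abs_right_lt_of_gap_eq_zero (h : ResonantPair K σ m ρ A B d a δ e U V W)
    (hx : x ∈ Icc A B) (hxd : x ∉ Icc 0 d) (hμ : |μ| ≤ δ) (hgap : gap U V W μ x = 0) :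
    |V x| < |μ| := by
  have hhalf := abs_le.1 (h.abs_right_add_le hx hμ)
  have hprod : Real.tan (U x) * Real.tan (V x + μ) < 0 := by
    rw [gap] at hgap
    linarith [h.weight.pos x hx]
  rcases lt_or_ge x 0 with hx₀ | hx₀
  · have hT := h.left_tan.neg_of_lt hx₀ hx.1
    have hV := h.right.neg_of_lt (hx₀.trans_le h.nonneg) hx.1
    have hVμ : 0 < V x + μ := by
      by_contra! hle
      have htan := le_tan_of_nonneg (neg_nonneg.2 hle) (by linarith)
      rw [Real.tan_neg] at htan
      exact hprod.not_ge (mul_nonneg_of_nonpos_of_nonpos hT.le (by linarith))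
    rw [abs_of_neg hV]
    linarith [le_abs_self μ]
  · have hdx : d < x := not_le.1 fun hle ↦ hxd ⟨hx₀, hle⟩
    have hT := h.left_tan.pos_of_lt (h.nonneg.trans_lt hdx) hx.2
    have hV := h.right.pos_of_lt hdx hx.2
    have hVμ : V x + μ < 0 := by
      by_contra! hle
      exact hprod.not_ge (mul_nonneg hT.le (hle.trans (le_tan_of_nonneg hle hhalf.2)))
    rw [abs_of_pos hV]
    linarith [neg_le_abs μ]

lemma exists_gap_eq_zero_of_norm_phase_le (h : ResonantPair K σ m ρ A B d a δ e U V W)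
    (hx : x ∈ Icc A B) (hδ : ‖phase U V W x‖ ≤ δ) :
    ∃ μ : ℝ, phase U V W x = μ ∧ |μ| = ‖phase U V W x‖ ∧ gap U V W μ x = 0 := by
  obtain ⟨μ, hμ, hnorm⟩ := exists_coe_eq_and_abs_eq_norm (phase U V W x)
  exact ⟨μ, hμ.symm, hnorm, (h.phase_eq_coe_iff hx (hnorm.trans_le hδ)).1 hμ.symm⟩

lemma abs_sub_le_of_norm_phase_lt (h : ResonantPair K σ m ρ A B d a δ e U V W) (hd : d ≤ δ)
    (hx : x ∈ Icc A B) (hlt : ‖phase U V W x‖ < (K + 1 / σ) * a) : |x - d| ≤ δ := by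
  by_cases hxd : x ∈ Icc 0 d
  · exact abs_le.2 ⟨by linarith [hxd.1], by linarith [hxd.2, h.δ_pos]⟩
  have hσ := h.left.slope_pos
  have hδ := hlt.le.trans h.scales.level_le
  obtain ⟨μ, -, hnorm, hgap⟩ := h.exists_gap_eq_zero_of_norm_phase_le hx hδ
  have hV := (h.abs_right_lt_of_gap_eq_zero hx hxd (hnorm.trans_le hδ) hgap).trans_eq hnorm
    |>.trans hlt
  exact le_of_mul_le_mul_left ((h.right.mul_abs_sub_le_of_abs_lt hx
    (hV.trans h.scales.level_lt)).trans (hV.le.trans h.scales.level_le_mul)) hσ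

lemma Icc_two_mul_subset_left (h : ResonantPair K σ m ρ A B d a δ e U V W) :
    Icc (-(2 * δ)) (2 * δ) ⊆ Icc (0 - ρ) (0 + ρ) :=
  Icc_subset_Icc (by linarith [h.δ_pos, h.scales.le_radius])
    (by linarith [h.δ_pos, h.scales.le_radius])

lemma Icc_two_mul_subset_right (h : ResonantPair K σ m ρ A B d a δ e U V W) (hd : d ≤ δ) :
    Icc (-(2 * δ)) (2 * δ) ⊆ Icc (d - ρ) (d + ρ) :=
  Icc_subset_Icc (by linarith [h.scales.le_radius])
    (by linarith [h.nonneg, h.δ_pos, h.scales.le_radius])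

lemma Icc_two_mul_subset (h : ResonantPair K σ m ρ A B d a δ e U V W) :
    Icc (-(2 * δ)) (2 * δ) ⊆ Ioo A B :=
  h.Icc_two_mul_subset_left.trans h.left.near_subset

lemma abs_left_tan_le (h : ResonantPair K σ m ρ A B d a δ e U V W)
    (hx : x ∈ Icc (-(2 * δ)) (2 * δ)) : |Real.tan (U x)| ≤ (3 * tanBound K + 2) * δ := by
  have hx₀ : |x - 0| ≤ 2 * δ := by rwa [sub_zero, abs_le]
  have htan := h.left_tan.abs_le (Ioo_subset_Icc_self (h.Icc_two_mul_subset hx))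
  have hM := h.left_tan.bound_pos
  calc |Real.tan (U x)| ≤ tanBound K * (2 * δ) := htan.trans (by gcongr)
    _ ≤ (3 * tanBound K + 2) * δ := by linarith [mul_pos hM h.δ_pos, h.δ_pos]

lemma abs_tan_right_add_le (h : ResonantPair K σ m ρ A B d a δ e U V W) (hd : d ≤ δ)
    (hμ : |μ| ≤ δ) (hx : x ∈ Icc (-(2 * δ)) (2 * δ)) :
    |Real.tan (V x + μ)| ≤ (3 * tanBound K + 2) * δ := by
  have hδ := h.δ_pos
  have hK := h.left.bound_pos
  have hxI := Ioo_subset_Icc_self (h.Icc_two_mul_subset hx)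
  have hxd : |x - d| ≤ 3 * δ := abs_le.2 ⟨by linarith [hx.1], by linarith [hx.2, h.nonneg]⟩
  have hKM : 2 * K ≤ tanBound K := by rw [tanBound]; linarith [sq_nonneg K]
  calc |Real.tan (V x + μ)| ≤ 2 * |V x + μ| := abs_tan_le_two_mul (h.abs_right_add_le hxI hμ)
    _ ≤ 2 * (|V x| + |μ|) := by gcongr; exact abs_add_le _ _
    _ ≤ 2 * (K * (3 * δ) + δ) := by gcongr; exact (h.right.abs_le hxI).trans (by gcongr)
    _ = (3 * (2 * K) + 2) * δ := by ring
    _ ≤ (3 * tanBound K + 2) * δ := by gcongr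

lemma strictConvexOn_gap (h : ResonantPair K σ m ρ A B d a δ e U V W) (hd : d ≤ δ)
    (hμ : |μ| ≤ δ) : StrictConvexOn ℝ (Icc (-(2 * δ)) (2 * δ)) (gap U V W μ) := by
  have hI := h.Icc_two_mul_subset
  have hhalf : ∀ x ∈ Icc (-(2 * δ)) (2 * δ), |V x + μ| ≤ 1 / 2 := fun x hx ↦
    h.abs_right_add_le (Ioo_subset_Icc_self (hI hx)) hμ
  have hVμ : ∀ x ∈ Icc (-(2 * δ)) (2 * δ), ContDiffAt ℝ 2 (fun y ↦ V y + μ) x := fun x hx ↦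
    (h.right.contDiffAt (hI hx)).add contDiffAt_const
  refine strictConvexOn_mul_add (convex_Icc _ _) (fun x hx ↦ h.left_tan.contDiffAt (hI hx))
    (fun x hx ↦ contDiffAt_tan_comp (hhalf x hx) (hVμ x hx))
    (fun x hx ↦ h.weight.contDiffOn.contDiffAt (Icc_mem_nhds (hI hx).1 (hI hx).2))
    h.left.slope_pos.le (fun x ↦ h.abs_left_tan_le)
    (fun x hx ↦ h.left_tan.le_deriv x (h.Icc_two_mul_subset_left hx))
    (fun x hx ↦ h.left_tan.abs_iteratedDeriv_two_le x (hI hx))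
    (fun x ↦ h.abs_tan_right_add_le hd hμ) (fun x hx ↦ ?_) (fun x hx ↦ ?_)
    (fun x hx ↦ h.weight.abs_iteratedDeriv_two_le x (hI hx)) h.scales.convex
  · refine le_deriv_tan_comp (hhalf x hx) ((hVμ x hx).differentiableAt two_ne_zero)
      h.left.slope_pos.le ?_
    rw [deriv_add_const]
    exact h.right.le_deriv x (h.Icc_two_mul_subset_right hd hx)
  · refine abs_iteratedDeriv_two_tan_comp_le (hhalf x hx) (hVμ x hx) ?_ ?_
    · rw [deriv_add_const]
      exact h.right.abs_deriv_le x (hI hx)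
    · rw [iteratedDeriv_succ_add_const 1]
      exact h.right.abs_iteratedDeriv_two_le x (hI hx)

lemma gap_zero_pos_of_forall_phase_ne_zero (h : ResonantPair K σ m ρ A B d a δ e U V W)
    (hne : ∀ y ∈ Icc A B, phase U V W y ≠ 0) (hx : x ∈ Icc A B) : 0 < gap U V W 0 x := by
  by_contra! hle
  obtain ⟨y, hy, hgap⟩ := isPreconnected_Icc.intermediate_value hx h.zero_mem
    (h.continuousOn_gap (abs_zero.trans_le h.δ_pos.le))
    ⟨hle, (h.gap_zero_pos_of_notMem_Ioo h.zero_mem left_notMem_Ioo).le⟩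
  exact hne y hy ((h.phase_eq_zero_iff hy).2 hgap)

lemma gap_nonneg_of_forall_le_norm_phase (h : ResonantPair K σ m ρ A B d a δ e U V W)
    (hμ₀ : μ ≠ 0) (hμ : |μ| ≤ δ) (hle : ∀ y ∈ Icc A B, |μ| ≤ ‖phase U V W y‖)
    (hx : x ∈ Icc A B) : 0 ≤ gap U V W μ x := by
  by_contra! hneg
  refine (h.norm_phase_lt_of_gap_neg hx hμ ?_ hneg).not_ge (hle x hx)
  exact h.gap_zero_pos_of_forall_phase_ne_zero
    (fun y hy ↦ norm_pos_iff.1 ((abs_pos.2 hμ₀).trans_le (hle y hy))) hx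

section Minimizers

variable {z : ℝ}

lemma norm_phase_lt_of_mem_normMinimizers (h : ResonantPair K σ m ρ A B d a δ e U V W)
    (hd : d < δ) (hx : x ∈ normMinimizers (phase U V W) (Icc A B)) :
    ‖phase U V W x‖ < (K + 1 / σ) * a :=
  (hx.2 h.add_mem).trans_lt (h.norm_phase_add_lt hd)

lemma abs_sub_le_of_mem_normMinimizers (h : ResonantPair K σ m ρ A B d a δ e U V W)
    (hd : d < δ) (hx : x ∈ normMinimizers (phase U V W) (Icc A B)) : |x - d| ≤ δ :=
  h.abs_sub_le_of_norm_phase_lt hd.le hx.1 (h.norm_phase_lt_of_mem_normMinimizers hd hx)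

lemma abs_lt_of_mem_normMinimizers (h : ResonantPair K σ m ρ A B d a δ e U V W)
    (hd : d < δ) (hx : x ∈ normMinimizers (phase U V W) (Icc A B)) : |x| < 2 * δ := by
  have := abs_le.1 (h.abs_sub_le_of_mem_normMinimizers hd hx)
  exact abs_lt.2 ⟨by linarith [h.nonneg, h.δ_pos], by linarith⟩

lemma mem_Icc_of_mem_normMinimizers (h : ResonantPair K σ m ρ A B d a δ e U V W)
    (hd : d < δ) (hx : x ∈ normMinimizers (phase U V W) (Icc A B)) :
    x ∈ Icc (-(2 * δ)) (2 * δ) :=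
  abs_le.1 (h.abs_lt_of_mem_normMinimizers hd hx).le

lemma exists_gap_eq_zero_of_mem_normMinimizers (h : ResonantPair K σ m ρ A B d a δ e U V W)
    (hd : d < δ) (hx : x ∈ normMinimizers (phase U V W) (Icc A B)) :
    ∃ μ : ℝ, phase U V W x = μ ∧ |μ| = ‖phase U V W x‖ ∧ |μ| ≤ δ ∧ gap U V W μ x = 0 := by
  have hδ := (h.norm_phase_lt_of_mem_normMinimizers hd hx).le.trans h.scales.level_le
  obtain ⟨μ, hμ, hnorm, hgap⟩ := h.exists_gap_eq_zero_of_norm_phase_le hx.1 hδ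
  exact ⟨μ, hμ, hnorm, hnorm.trans_le hδ, hgap⟩

lemma eq_of_phase_eq_of_lt (h : ResonantPair K σ m ρ A B d a δ e U V W) (hd : d < δ)
    (hx : x ∈ normMinimizers (phase U V W) (Icc A B))
    (hy : y ∈ normMinimizers (phase U V W) (Icc A B)) (hxy : phase U V W x = phase U V W y)
    (hx₀ : phase U V W x ≠ 0) : x = y := by
  obtain ⟨μ, hμ, hnorm, hδ, hgap⟩ := h.exists_gap_eq_zero_of_mem_normMinimizers hd hx
  have hgap' : gap U V W μ y = 0 := (h.phase_eq_coe_iff hy.1 hδ).1 (hxy ▸ hμ)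
  have hnonneg : ∀ z ∈ Icc (-(2 * δ)) (2 * δ), 0 ≤ gap U V W μ z := fun z hz ↦
    h.gap_nonneg_of_forall_le_norm_phase (abs_pos.1 (hnorm ▸ norm_pos_iff.2 hx₀)) hδ
      (fun w hw ↦ hnorm.trans_le (hx.2 hw)) (Ioo_subset_Icc_self (h.Icc_two_mul_subset hz))
  exact (h.strictConvexOn_gap hd.le hδ).eq_of_isMinOn
    (fun z hz ↦ hgap.trans_le (hnonneg z hz)) (fun z hz ↦ hgap'.trans_le (hnonneg z hz))
    (h.mem_Icc_of_mem_normMinimizers hd hx) (h.mem_Icc_of_mem_normMinimizers hd hy)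

lemma exists_phase_eq_of_mem_normMinimizers (h : ResonantPair K σ m ρ A B d a δ e U V W)
    (hd : d < δ) (hx : x ∈ normMinimizers (phase U V W) (Icc A B))
    (hy : y ∈ normMinimizers (phase U V W) (Icc A B))
    (hz : z ∈ normMinimizers (phase U V W) (Icc A B)) :
    phase U V W x = phase U V W y ∨ phase U V W y = phase U V W z ∨
      phase U V W x = phase U V W z := by
  obtain ⟨μx, hμx, hnx, -⟩ := h.exists_gap_eq_zero_of_mem_normMinimizers hd hx
  obtain ⟨μy, hμy, hny, -⟩ := h.exists_gap_eq_zero_of_mem_normMinimizers hd hy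
  obtain ⟨μz, hμz, hnz, -⟩ := h.exists_gap_eq_zero_of_mem_normMinimizers hd hz
  have hxy := abs_eq_abs.1 (hnx.trans ((norm_eq_of_mem_normMinimizers hx hy).trans hny.symm))
  have hyz := abs_eq_abs.1 (hny.trans ((norm_eq_of_mem_normMinimizers hy hz).trans hnz.symm))
  rw [hμx, hμy, hμz]
  rcases hxy with rfl | rfl
  · exact .inl rfl
  rcases hyz with rfl | rfl
  · exact .inr (.inl rfl)
  · exact .inr (.inr (by rw [neg_neg]))

lemma not_lt_of_mem_normMinimizers (h : ResonantPair K σ m ρ A B d a δ e U V W) (hd : d < δ)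
    (hx : x ∈ normMinimizers (phase U V W) (Icc A B))
    (hy : y ∈ normMinimizers (phase U V W) (Icc A B))
    (hz : z ∈ normMinimizers (phase U V W) (Icc A B)) (hxy : x < y) : ¬ y < z := by
  intro hyz
  by_cases hx₀ : phase U V W x = 0
  · have hgap : ∀ w ∈ normMinimizers (phase U V W) (Icc A B), gap U V W 0 w = 0 := fun w hw ↦
      (h.phase_eq_zero_iff hw.1).1 <| norm_eq_zero.1 <|
        (norm_eq_of_mem_normMinimizers hw hx).trans (norm_eq_zero.2 hx₀)
    have hslope := (h.strictConvexOn_gap hd.le (abs_zero.trans_le h.δ_pos.le)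
      ).slope_strict_mono_adjacent (h.mem_Icc_of_mem_normMinimizers hd hx)
      (h.mem_Icc_of_mem_normMinimizers hd hz) hxy hyz
    rw [hgap x hx, hgap y hy, hgap z hz, sub_self, zero_div, zero_div] at hslope
    exact lt_irrefl _ hslope
  · have hy₀ : phase U V W y ≠ 0 := norm_ne_zero_iff.1 <|
      norm_eq_of_mem_normMinimizers hx hy ▸ norm_ne_zero_iff.2 hx₀
    rcases h.exists_phase_eq_of_mem_normMinimizers hd hx hy hz with heq | heq | heq
    · exact hxy.ne (h.eq_of_phase_eq_of_lt hd hx hy heq hx₀)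
    · exact hyz.ne (h.eq_of_phase_eq_of_lt hd hy hz heq hy₀)
    · exact (hxy.trans hyz).ne (h.eq_of_phase_eq_of_lt hd hx hz heq hx₀)

lemma nonempty_normMinimizers (h : ResonantPair K σ m ρ A B d a δ e U V W) :
    (normMinimizers (phase U V W) (Icc A B)).Nonempty :=
  isCompact_Icc.exists_isMinOn ⟨0, h.zero_mem⟩ h.continuousOn_phase.norm

lemma exists_normMinimizers_eq_pair_of_le (h : ResonantPair K σ m ρ A B d a δ e U V W)
    (hδd : δ ≤ d) : ∃ x₁ ∈ Ioo 0 a, ∃ x₂ ∈ Ioo (d - a) d,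
      normMinimizers (phase U V W) (Icc A B) = {x₁, x₂} ∧ phase U V W x₁ = 0 := by
  obtain ⟨x₁, hx₁, x₂, hx₂, hzero⟩ := h.exists_gap_zero_eq_zero_iff hδd
  have hmem : ∀ x ∈ Ioo 0 d, x ∈ Icc A B := fun x hx ↦
    Ioo_subset_Icc_self (h.Icc_zero_subset (Ioo_subset_Icc_self hx))
  have ha := h.scales.pos
  have ha₂ := h.scales.two_mul_lt
  have hx₁I := hmem x₁ ⟨hx₁.1, by linarith [hx₁.2]⟩
  have hx₂I := hmem x₂ ⟨by linarith [hx₂.1], hx₂.2⟩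
  have hphase : ∀ x ∈ Icc A B, phase U V W x = 0 ↔ x = x₁ ∨ x = x₂ := fun x hx ↦
    (h.phase_eq_zero_iff hx).trans (hzero x hx)
  have hx₁₀ := (hphase x₁ hx₁I).2 (.inl rfl)
  refine ⟨x₁, hx₁, x₂, hx₂, ?_, hx₁₀⟩
  rw [normMinimizers_eq_of_eq_zero hx₁I hx₁₀]
  refine Subset.antisymm (fun x hx ↦ (hphase x hx.1).1 hx.2) (pair_subset ⟨hx₁I, hx₁₀⟩ ?_)
  exact ⟨hx₂I, (hphase x₂ hx₂I).2 (.inr rfl)⟩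

theorem exists_normMinimizers_eq_pair (h : ResonantPair K σ m ρ A B d a δ e U V W) :
    ∃ x₁ x₂, x₁ ≤ x₂ ∧ normMinimizers (phase U V W) (Icc A B) = {x₁, x₂} ∧
      |x₁| < 2 * δ ∧ |x₂ - d| < 2 * δ := by
  have hδ := h.δ_pos
  rcases le_or_gt δ d with hδd | hd
  · obtain ⟨x₁, hx₁, x₂, hx₂, hpair, -⟩ := h.exists_normMinimizers_eq_pair_of_le hδd
    have ha := h.scales.two_mul_lt
    refine ⟨x₁, x₂, by linarith [hx₁.2, hx₂.1], hpair, abs_lt.2 ?_, abs_lt.2 ?_⟩ <;>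
      constructor <;> linarith [hx₁.1, hx₁.2, hx₂.1, hx₂.2]
  · obtain ⟨x₁, x₂, hle, hpair⟩ := exists_eq_pair_of_forall_not_lt_lt h.nonempty_normMinimizers
      fun x hx y hy z hz ↦ h.not_lt_of_mem_normMinimizers hd hx hy hz
    refine ⟨x₁, x₂, hle, hpair, ?_, ?_⟩
    · exact h.abs_lt_of_mem_normMinimizers hd (hpair ▸ mem_insert x₁ {x₂})
    · refine (h.abs_sub_le_of_mem_normMinimizers hd ?_).trans_lt (by linarith)
      exact hpair ▸ mem_insert_of_mem x₁ rfl

theorem eq_of_phase_eq (h : ResonantPair K σ m ρ A B d a δ e U V W)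
    (hx : x ∈ normMinimizers (phase U V W) (Icc A B))
    (hy : y ∈ normMinimizers (phase U V W) (Icc A B)) (hxy : phase U V W x = phase U V W y)
    (hx₀ : phase U V W x ≠ 0) : x = y := by
  rcases le_or_gt δ d with hδd | hd
  · obtain ⟨x₁, -, x₂, -, hpair, hx₁⟩ := h.exists_normMinimizers_eq_pair_of_le hδd
    have hx₁I : x₁ ∈ Icc A B :=
      (hpair ▸ mem_insert x₁ {x₂} : x₁ ∈ normMinimizers (phase U V W) (Icc A B)).1
    rw [normMinimizers_eq_of_eq_zero hx₁I hx₁] at hx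
    exact absurd hx.2 hx₀
  · exact h.eq_of_phase_eq_of_lt hd hx hy hxy hx₀

end Minimizers

end ResonantPair

section TypeThree

variable {C c r β l₀ d : ℝ} {l f₁ f₂ : ℝ → ℝ}

lemma tan_sub_of_coe_eq_zero {b : ℝ} (hb : (b : AddCircle π) = 0) (t : ℝ) :
    Real.tan (t - b) = Real.tan t := by
  obtain ⟨n, rfl⟩ := (AddCircle.coe_eq_zero_iff π).1 hb
  rw [zsmul_eq_mul, Real.tan_sub_int_mul_pi]

lemma coe_eq_phase {f : ℝ → ℝ} {x₁ x₂ : ℝ} (h₁ : (f₁ x₁ : AddCircle π) = 0)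
    (h₂ : (f₂ x₂ : AddCircle π) = 0)
    (hf : ∀ x, f x = Real.arctan (l x ^ 2 * Real.tan (f₁ x)) - π / 2 + f₂ x) :
    (fun x ↦ (f x : AddCircle π)) =
      phase (fun x ↦ f₁ x - f₁ x₁) (fun x ↦ (-f₂) x - (-f₂) x₂) fun x ↦ (l x ^ 2)⁻¹ := by
  funext x
  rw [hf, phase, tan_sub_of_coe_eq_zero h₁, inv_inv, Pi.neg_apply, Pi.neg_apply, sub_neg_eq_add,
    sub_add_eq_sub_sub, sub_neg_eq_add, AddCircle.coe_sub _ _ (f₂ x₂), h₂, sub_zero]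

lemma resonantPair_of_typeOnePlus (hc : 0 < c) (hr : 0 < r) (hCr : C * r ≤ 1 / 16) (hβ : 0 ≤ β)
    (hβ1 : β ≤ 1) (hl₀ : 1 ≤ l₀)
    (hscales : Scales C (r ^ 2) (min (1 / 2) c * r ^ 3) (r / 2) l₀⁻¹ (l₀ ^ (-(3 : ℝ) / 4))
      (8 * (l₀ ^ (β - 1)) ^ 2))
    (hl : ContDiffOn ℝ 2 l (Metric.closedBall 0 r))
    (hbound : ∀ x ∈ Metric.closedBall (0 : ℝ) r, l₀ < l x ∧ |deriv l x| < l x ^ (1 + β) ∧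
      |iteratedDeriv 2 l x| < l x ^ (1 + β))
    (h₁ : TypeOnePlus C c r 0 0 f₁) (hd : 0 ≤ d) (h₂ : TypeOnePlus C c r 0 d f₂) :
    ResonantPair C (r ^ 2) (min (1 / 2) c * r ^ 3) (r / 2) (0 - r) (0 + r) d l₀⁻¹
      (l₀ ^ (-(3 : ℝ) / 4)) (8 * (l₀ ^ (β - 1)) ^ 2) (fun x ↦ f₁ x - f₁ 0) (fun x ↦ f₂ x - f₂ d)
      (fun x ↦ (l x ^ 2)⁻¹) where
  scales := hscales
  left := h₁.steepZero hr hc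
  right := h₂.steepZero hr hc
  weight := by
    rw [Real.closedBall_eq_Icc] at hl hbound
    exact smallWeight_inv_sq hβ hβ1 hl₀ hl hbound
  length_le := by linarith
  nonneg := hd
  le_radius := by
    have hd₃ : |d - 0| ≤ r / 3 := Metric.mem_closedBall.1 h₂.1.2.2.1
    linarith [le_abs_self (d - 0)]

end TypeThree

/-- Location of the minimizers of a type III function
f = arctan(l²·tan f₁) - π/2 + f₂ (f₁ of type I₊ with zero 0, f₂ of type I₋ with zero
d ∈ [0, 2r/3], l > l₀ with |l^{(m)}| < l^{1+β}): the set X of minimizers of |f| (distance in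
ℝ/πℤ) consists of at most two points x₁ ≤ x₂; |x₁| < C′ l₀^{-3/4} and |x₂ - d| < C′ l₀^{-3/4};
if f(x₁) = f(x₂) = 0 then 0 < x₁ ≤ x₂ < d; and if f(x₁) = f(x₂) ≠ 0 then x₁ = x₂. -/
theorem typeIII_minimizers (C c β : ℝ) (hC : 0 < C) (hc : 0 < c) (hβ : 0 < β) (hβ1 : β < 1) :
    ∃ C' > (0 : ℝ), ∃ r₀ ∈ Set.Ioo (0 : ℝ) 1, ∀ r ∈ Set.Ioo (0 : ℝ) r₀,
    ∃ L₀ > r⁻¹, ∀ l₀ ≥ L₀, ∀ (l f₁ f₂ f : ℝ → ℝ) (d : ℝ),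
      ContDiffOn ℝ 2 l (Metric.closedBall 0 r) →
      (∀ x ∈ Metric.closedBall (0 : ℝ) r, l₀ < l x ∧
        |deriv l x| < l x ^ ((1 : ℝ) + β) ∧ |iteratedDeriv 2 l x| < l x ^ ((1 : ℝ) + β)) →
      TypeOnePlus C c r 0 0 f₁ → 0 ≤ d → d ≤ 2 * r / 3 → TypeOneMinus C c r 0 d f₂ →
      (∀ x, f x = Real.arctan (l x ^ 2 * Real.tan (f₁ x)) - π / 2 + f₂ x) →
      ∃ x₁ x₂ : ℝ, x₁ ≤ x₂ ∧
        x₁ ∈ Metric.closedBall (0 : ℝ) r ∧ x₂ ∈ Metric.closedBall (0 : ℝ) r ∧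
        (∀ y ∈ Metric.closedBall (0 : ℝ) r, pDist (f x₁) ≤ pDist (f y)) ∧
        (∀ y ∈ Metric.closedBall (0 : ℝ) r, pDist (f x₂) ≤ pDist (f y)) ∧
        (∀ x ∈ Metric.closedBall (0 : ℝ) r,
          (∀ y ∈ Metric.closedBall (0 : ℝ) r, pDist (f x) ≤ pDist (f y)) → x = x₁ ∨ x = x₂) ∧
        |x₁| < C' * l₀ ^ (-(3 : ℝ) / 4) ∧ |x₂ - d| < C' * l₀ ^ (-(3 : ℝ) / 4) ∧
        (((f x₁ : AddCircle π) = 0 ∧ (f x₂ : AddCircle π) = 0) → 0 < x₁ ∧ x₂ < d) ∧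
        (((f x₁ : AddCircle π) = (f x₂ : AddCircle π) ∧ (f x₁ : AddCircle π) ≠ 0) →
          x₁ = x₂) := by
  refine ⟨2, two_pos, min (1 / 2) (1 / (16 * C)),
    ⟨by positivity, (min_le_left _ _).trans_lt one_half_lt_one⟩, fun r ⟨hr, hr₀⟩ ↦ ?_⟩
  have hCr : C * r ≤ 1 / 16 := by
    linarith [(lt_div_iff₀ (by positivity)).1 (hr₀.trans_le (min_le_right _ _))]
  obtain ⟨L₀, hL₀⟩ := ((eventually_scales (σ := r ^ 2) (m := min (1 / 2) c * r ^ 3) (ρ := r / 2) C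
    (by positivity) (by positivity) (by positivity) hβ1).and
      ((eventually_ge_atTop 1).and (eventually_gt_atTop r⁻¹))).exists_forall_of_atTop
  refine ⟨L₀, (hL₀ L₀ le_rfl).2.2, fun l₀ hl₀ l f₁ f₂ f d hl hbound h₁ hd _ h₂ hf ↦ ?_⟩
  obtain ⟨hscales, hl₀, -⟩ := hL₀ l₀ hl₀
  have hpair := resonantPair_of_typeOnePlus hc hr hCr hβ.le hβ1.le hl₀ hscales hl hbound h₁ hd
    h₂.neg
  obtain ⟨x₁, x₂, hle, hX, hx₁, hx₂⟩ := hpair.exists_normMinimizers_eq_pair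
  have hzero := fun x ↦ hpair.mem_Ioo_of_phase_eq_zero (x := x)
  have hinj := fun x y ↦ hpair.eq_of_phase_eq (x := x) (y := y)
  rw [← Real.closedBall_eq_Icc, ← coe_eq_phase h₁.1.2.2.2.1 h₂.1.2.2.2.1 hf] at hX hzero hinj
  have hmem₁ := hX.ge (mem_insert x₁ {x₂})
  have hmem₂ := hX.ge (mem_insert_of_mem x₁ rfl)
  exact ⟨x₁, x₂, hle, hmem₁.1, hmem₂.1, fun _ hy ↦ hmem₁.2 hy, fun _ hy ↦ hmem₂.2 hy,
    fun x hx hmin ↦ hX.le ⟨hx, hmin⟩, hx₁, hx₂,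
    fun h₀ ↦ ⟨(hzero x₁ hmem₁.1 h₀.1).1, (hzero x₂ hmem₂.1 h₀.2).2⟩,
    fun heq ↦ hinj x₁ x₂ hmem₁ hmem₂ heq.1 heq.2⟩
end
end
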